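/- arXiv:1603.03134 — 2 statements merged into one kernel-verified Lean document; each statement's English description precedes it below -/
import Mathlib

section
/- There is an absolute constant \(C>0\) such that for every integer \(k\geq 1\), every real \(t\) and every \(0<z<1\), the quantity \(I(z):=\lim_{b\to 0^{+}}\int_{0}^{\infty}e^{-by}J_{2k-1}(y)\,k^{+}(y\sqrt{z},1/2+it)\,dy\) satisfies \(|I(z)|\leq C\Bigl(1+|\log z|+\frac{1}{(2k-1)\sqrt{1-z}}\Bigr)\). -/
open MeasureTheory Filter

/-- The Bessel function of the first kind of complex order `μ`, for real argument `y > 0`: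
`J_μ(y) = ∑_{n≥0} (-1)^n / (Γ(n+1) Γ(n+1+μ)) (y/2)^{μ+2n}`, with powers taken via the real
logarithm. -/
noncomputable def besselJ (μ : ℂ) (y : ℝ) : ℂ :=
  ∑' n : ℕ, ((-1 : ℂ) ^ n / (Complex.Gamma (n + 1) * Complex.Gamma (n + 1 + μ))) *
    Complex.exp ((μ + 2 * n) * Real.log (y / 2))

/-- `k⁺(y,v) = (J_{2v-1}(y) - J_{1-2v}(y)) / (2 cos πv)`. -/
noncomputable def kplus (y : ℝ) (v : ℂ) : ℂ :=
  (besselJ (2 * v - 1) y - besselJ (1 - 2 * v) y) / (2 * Complex.cos (Real.pi * v))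

open Set
open scoped Topology Real

/-!
For `t ≠ 0`, `k⁺(cy, 1/2 + it)` is `1/π` times the sum of the boundary values at `± icy` of the
modified Bessel function `K_{2it}`, and `K_ν(x) = 1/2 ∫ e^{νu - x cosh u} du` on the right
half-plane. Exchanging the two integrations turns `∫ e^{-by} J_n(y) K_ν(ωy) dy`, for `ω` near
`± ic`, into an integral over `u` of `e^{νu} L_n(b + ω cosh u)`, where
`L_n(sinh w) = e^{-nw} / cosh w` is the Laplace transform of `J_n`. As `re ν = 0`, only `|L_n|`
matters, and at `p = b + ω cosh u` it is bounded through `|im p| = c cosh u` alone, uniformly in `b`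
and `re ω`, by a function with an inverse square root singularity at `|im p| = 1`.
With `c = 1 / cosh L`, the part `u < L` contributes `O(L / tanh L)` and the part `u > L`, where
`e^{-n re w}` decays, contributes `O(1 / (n tanh L))`; for `c = √z`, `L ≤ log 2 + |log z| / 2` and
`tanh L = √(1 - z)`.
-/

/-! ### The functions `K_ν` -/

theorem one_add_sq_div_four_le_cosh (u : ℝ) : (1 + u ^ 2) / 4 ≤ Real.cosh u := by
  have hexp := Real.quadratic_le_exp_of_nonneg (abs_nonneg u)
  rw [sq_abs] at hexp
  rw [← Real.cosh_abs, Real.cosh_eq]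
  linarith [abs_nonneg u, Real.exp_pos (-|u|)]

theorem continuous_inv_cosh : Continuous fun u : ℝ => (Real.cosh u)⁻¹ :=
  Real.continuous_cosh.inv₀ fun u => (Real.cosh_pos u).ne'

theorem integrable_inv_cosh : Integrable fun u : ℝ => (Real.cosh u)⁻¹ := by
  refine (integrable_inv_one_add_sq.const_mul 4).mono'
    continuous_inv_cosh.aestronglyMeasurable (ae_of_all _ fun u => ?_)
  rw [Real.norm_of_nonneg (inv_nonneg.2 (Real.cosh_pos u).le), ← div_eq_mul_inv, ← inv_div]
  exact inv_anti₀ (by positivity) (one_add_sq_div_four_le_cosh u)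

theorem integrable_exp_mul_sub_mul_cosh {a : ℝ} (ha : 0 < a) (m : ℝ) :
    Integrable fun u : ℝ => Real.exp (m * u - a * Real.cosh u) := by
  have hgauss := (integrable_cexp_quadratic (b := ((a / 4 : ℝ) : ℂ)) (by simpa using ha) m 0).norm
  refine hgauss.mono' (by fun_prop) (ae_of_all _ fun u => ?_)
  rw [Real.norm_of_nonneg (Real.exp_pos _).le, Complex.norm_exp, Real.exp_le_exp,
    show -((a / 4 : ℝ) : ℂ) * (u : ℂ) ^ 2 + (m : ℂ) * u + 0 = ((m * u - a * (u ^ 2 / 4) : ℝ) : ℂ) by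
      push_cast; ring, Complex.ofReal_re]
  gcongr
  linarith [one_add_sq_div_four_le_cosh u]

/-- The integrand `e^{νu - x cosh u}` of the integral representation of `K_ν(x)`. -/
noncomputable def besselKKernel (ν x : ℂ) (u : ℝ) : ℂ := Complex.exp (ν * u - x * Real.cosh u)

/-- The modified Bessel function of the second kind `K_ν(x)`, defined for `0 < re x` by
`K_ν(x) = ½ ∫_ℝ e^{νu - x cosh u} du`. -/
noncomputable def besselK (ν x : ℂ) : ℂ := (1 / 2) * ∫ u, besselKKernel ν x u

@[fun_prop]
theorem continuous_besselKKernel (ν x : ℂ) : Continuous (besselKKernel ν x) := by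
  unfold besselKKernel
  fun_prop

theorem norm_besselKKernel (ν x : ℂ) (u : ℝ) :
    ‖besselKKernel ν x u‖ = Real.exp (ν.re * u - x.re * Real.cosh u) := by
  simp only [besselKKernel, Complex.norm_exp, Complex.sub_re, Complex.mul_re, Complex.ofReal_re,
    Complex.ofReal_im, mul_zero, sub_zero]

theorem integrable_besselKKernel {x : ℂ} (hx : 0 < x.re) (ν : ℂ) :
    Integrable (besselKKernel ν x) :=
  (integrable_exp_mul_sub_mul_cosh hx ν.re).mono' (by fun_prop)
    (ae_of_all _ fun u => (norm_besselKKernel ν x u).le)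

theorem besselKKernel_add_one (ν x : ℂ) (u : ℝ) :
    besselKKernel (ν + 1) x u = besselKKernel ν x u * Complex.exp u := by
  rw [besselKKernel, besselKKernel, ← Complex.exp_add]
  ring_nf

theorem besselKKernel_sub_one (ν x : ℂ) (u : ℝ) :
    besselKKernel (ν - 1) x u = besselKKernel ν x u * Complex.exp (-u) := by
  rw [besselKKernel, besselKKernel, ← Complex.exp_add]
  ring_nf

theorem besselKKernel_mul_cosh (ν x : ℂ) (u : ℝ) :
    besselKKernel ν x u * Real.cosh u =
      (1 / 2) * (besselKKernel (ν + 1) x u + besselKKernel (ν - 1) x u) := by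
  rw [besselKKernel_add_one, besselKKernel_sub_one, Complex.ofReal_cosh, Complex.cosh]
  ring

theorem besselKKernel_mul_sinh (ν x : ℂ) (u : ℝ) :
    besselKKernel ν x u * Real.sinh u =
      (1 / 2) * (besselKKernel (ν + 1) x u - besselKKernel (ν - 1) x u) := by
  rw [besselKKernel_add_one, besselKKernel_sub_one, Complex.ofReal_sinh, Complex.sinh]
  ring

theorem besselK_neg (ν x : ℂ) : besselK (-ν) x = besselK ν x := by
  unfold besselK
  rw [← integral_neg_eq_self]
  simp [besselKKernel]

theorem hasDerivAt_besselKKernel (ν x : ℂ) (u : ℝ) :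
    HasDerivAt (besselKKernel ν x) (besselKKernel ν x u * (ν - x * Real.sinh u)) u := by
  have hcosh : HasDerivAt (fun u : ℝ => (Real.cosh u : ℂ)) (Real.sinh u : ℂ) u :=
    (Real.hasDerivAt_cosh u).ofReal_comp
  exact ((((hasDerivAt_id u).ofReal_comp.const_mul ν).fun_sub (hcosh.const_mul x)).cexp).congr_deriv
    (by simp [besselKKernel])

theorem integrable_besselKKernel_mul_of_bound {x : ℂ} (hx : 0 < x.re) (ν : ℂ) {g : ℝ → ℝ} {C : ℝ}
    (hg : Continuous g) (hgC : ∀ u, |g u| ≤ C) : Integrable fun u => besselKKernel ν x u * g u :=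
  (integrable_besselKKernel hx ν).mul_bdd (Continuous.aestronglyMeasurable (by fun_prop))
    (ae_of_all _ fun u => (Complex.norm_real _).trans_le (hgC u))

theorem integrable_besselKKernel_mul_sinh_mul_of_bound {x : ℂ} (hx : 0 < x.re) (ν : ℂ) {g : ℝ → ℝ}
    {C : ℝ} (hg : Continuous g) (hgC : ∀ u, |g u| ≤ C) :
    Integrable fun u => besselKKernel ν x u * Real.sinh u * g u := by
  simp only [besselKKernel_mul_sinh, mul_assoc, sub_mul]
  exact ((integrable_besselKKernel_mul_of_bound hx _ hg hgC).sub
    (integrable_besselKKernel_mul_of_bound hx _ hg hgC)).const_mul _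

theorem mul_integral_besselKKernel_mul_sinh {x : ℂ} (hx : 0 < x.re) (ν : ℂ) {g g' : ℝ → ℝ} {C : ℝ}
    (hg : ∀ u, HasDerivAt g (g' u) u) (hg' : Continuous g') (hgC : ∀ u, |g u| ≤ C)
    (hgC' : ∀ u, |g' u| ≤ C) :
    x * ∫ u, besselKKernel ν x u * Real.sinh u * g u =
      ∫ u, besselKKernel ν x u * (ν * g u + g' u) := by
  have hgcont : Continuous g := continuous_iff_continuousAt.2 fun u => (hg u).continuousAt
  have hgint := integrable_besselKKernel_mul_of_bound hx ν hgcont hgC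
  have hleft := (integrable_besselKKernel_mul_sinh_mul_of_bound hx ν hgcont hgC).const_mul x
  have hright : Integrable fun u => besselKKernel ν x u * (ν * g u + g' u) :=
    ((hgint.const_mul ν).add (integrable_besselKKernel_mul_of_bound hx ν hg' hgC')).congr
      (ae_of_all _ fun u => by simp only [Pi.add_apply]; ring)
  have hderiv (u : ℝ) : HasDerivAt (fun u => besselKKernel ν x u * g u)
      (besselKKernel ν x u * (ν * g u + g' u) - x * (besselKKernel ν x u * Real.sinh u * g u)) u :=
    ((hasDerivAt_besselKKernel ν x u).mul (hg u).ofReal_comp).congr_deriv (by ring)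
  rw [← integral_const_mul, ← sub_eq_zero.1 ((integral_sub hright hleft).symm.trans
    (integral_eq_zero_of_hasDerivAt_of_integrable hderiv (hright.sub hleft) hgint))]

theorem mul_besselK_eq {x : ℂ} (hx : 0 < x.re) (ν : ℂ) :
    ν * besselK ν x = x / 2 * (besselK (ν + 1) x - besselK (ν - 1) x) := by
  have hparts := mul_integral_besselKKernel_mul_sinh hx ν (g := fun _ => 1) (g' := fun _ => 0)
    (C := 1) (fun u => hasDerivAt_const u 1) continuous_const (by simp) (by simp)
  simp only [besselKKernel_mul_sinh, Complex.ofReal_one, Complex.ofReal_zero, mul_one, add_zero,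
    mul_comm _ ν] at hparts
  rw [integral_const_mul, integral_const_mul, integral_sub (integrable_besselKKernel hx _)
    (integrable_besselKKernel hx _)] at hparts
  unfold besselK
  linear_combination (-1 / 2) * hparts

theorem hasDerivAt_besselK_symm {x : ℂ} (hx : 0 < x.re) (ν : ℂ) :
    HasDerivAt (besselK ν) (-(1 / 2) * (besselK (ν + 1) x + besselK (ν - 1) x)) x := by
  have hre {y : ℂ} (hy : y ∈ Metric.ball x (x.re / 2)) : x.re / 2 ≤ y.re := by
    have := (abs_lt.1 ((Complex.abs_re_le_norm _).trans_lt (mem_ball_iff_norm.1 hy))).1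
    rw [Complex.sub_re] at this
    linarith
  have hderiv := (hasDerivAt_integral_of_dominated_loc_of_deriv_le (𝕜 := ℂ) (μ := volume)
    (F := fun x u => besselKKernel ν x u)
    (F' := fun x u => -(besselKKernel ν x u * Real.cosh u))
    (bound := fun u => ‖besselKKernel ν (x.re / 2 : ℝ) u * Real.cosh u‖)
    (Metric.ball_mem_nhds x (half_pos hx)) (Eventually.of_forall fun x => by fun_prop)
    (integrable_besselKKernel hx ν) (by fun_prop) (ae_of_all _ fun u y hy => ?_) ?_
    (ae_of_all _ fun u y _ => ?_)).2
  · simp only [besselKKernel_mul_cosh, integral_neg, integral_const_mul] at hderiv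
    rw [integral_add (integrable_besselKKernel hx _) (integrable_besselKKernel hx _)] at hderiv
    exact (hderiv.const_mul (1 / 2)).congr_deriv (by unfold besselK; ring)
  · rw [norm_neg, norm_mul, norm_mul, norm_besselKKernel, norm_besselKKernel, Complex.ofReal_re]
    gcongr
    exact hre hy
  · have hx' : 0 < ((x.re / 2 : ℝ) : ℂ).re := by simpa using hx
    simp only [besselKKernel_mul_cosh]
    exact (((integrable_besselKKernel hx' _).add (integrable_besselKKernel hx' _)).const_mul _).norm
  · have := (((hasDerivAt_id y).mul_const (Real.cosh u : ℂ)).const_sub (ν * u)).cexp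
    exact this.congr_deriv (by simp [besselKKernel])

theorem hasDerivAt_besselK {x : ℂ} (hx : 0 < x.re) (ν : ℂ) :
    HasDerivAt (besselK ν) (ν / x * besselK ν x - besselK (ν + 1) x) x := by
  have hx0 : x ≠ 0 := fun h => by simp [h] at hx
  refine (hasDerivAt_besselK_symm hx ν).congr_deriv ?_
  field_simp
  linear_combination -2 * mul_besselK_eq hx ν

theorem hasDerivAt_besselK_add_one {x : ℂ} (hx : 0 < x.re) (ν : ℂ) :
    HasDerivAt (besselK (ν + 1)) (-besselK ν x - (ν + 1) / x * besselK (ν + 1) x) x := by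
  have hx0 : x ≠ 0 := fun h => by simp [h] at hx
  refine (hasDerivAt_besselK_symm hx (ν + 1)).congr_deriv ?_
  have hrec := mul_besselK_eq hx (ν + 1)
  rw [add_sub_cancel_right] at hrec ⊢
  field_simp
  linear_combination 2 * hrec

theorem hasDerivAt_sinh_mul_inv_cosh_sq (u : ℝ) :
    HasDerivAt (fun u => Real.sinh u * (Real.cosh u)⁻¹ ^ 2)
      (2 * (Real.cosh u)⁻¹ ^ 3 - (Real.cosh u)⁻¹) u := by
  have hcosh := (Real.cosh_pos u).ne'
  refine ((Real.hasDerivAt_sinh u).mul (((Real.hasDerivAt_cosh u).fun_inv hcosh).fun_pow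
    2)).congr_deriv ?_
  rw [Nat.add_one_sub_one, pow_one]
  field_simp
  push_cast
  linear_combination 2 * Real.cosh_sq u

theorem abs_sinh_mul_inv_cosh_sq_le (u : ℝ) :
    |Real.sinh u * (Real.cosh u)⁻¹ ^ 2| ≤ (Real.cosh u)⁻¹ := by
  have hcosh := Real.cosh_pos u
  have hle : |Real.sinh u| ≤ Real.cosh u :=
    abs_le_of_sq_le_sq (by linarith [Real.cosh_sq u]) hcosh.le
  rw [abs_mul, abs_of_nonneg (by positivity : 0 ≤ (Real.cosh u)⁻¹ ^ 2)]
  calc |Real.sinh u| * (Real.cosh u)⁻¹ ^ 2 ≤ Real.cosh u * (Real.cosh u)⁻¹ ^ 2 := by gcongr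
    _ = (Real.cosh u)⁻¹ := by field_simp

theorem inv_cosh_pow_le (u : ℝ) {m : ℕ} (hm : m ≠ 0) :
    (Real.cosh u)⁻¹ ^ m ≤ (Real.cosh u)⁻¹ :=
  pow_le_of_le_one (inv_nonneg.2 (Real.cosh_pos u).le) (inv_le_one_of_one_le₀ (Real.one_le_cosh u))
    hm

theorem abs_two_mul_inv_cosh_cube_sub_inv_cosh_le (u : ℝ) :
    |2 * (Real.cosh u)⁻¹ ^ 3 - (Real.cosh u)⁻¹| ≤ (Real.cosh u)⁻¹ := by
  have hpos : 0 < (Real.cosh u)⁻¹ ^ 3 := pow_pos (inv_pos.2 (Real.cosh_pos u)) 3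
  rw [abs_le]
  constructor <;> linarith [inv_cosh_pow_le u three_ne_zero]

theorem norm_besselKKernel_le_one {ν x : ℂ} (hν : ν.re = 0) (hx : 0 ≤ x.re) (u : ℝ) :
    ‖besselKKernel ν x u‖ ≤ 1 := by
  rw [norm_besselKKernel, hν, zero_mul, zero_sub, Real.exp_le_one_iff, neg_nonpos]
  exact mul_nonneg hx (Real.cosh_pos u).le

theorem norm_integral_besselKKernel_mul_le {ν x : ℂ} (hν : ν.re = 0) (hx : 0 ≤ x.re) {g : ℝ → ℂ}
    {C : ℝ} (hg : ∀ u, ‖g u‖ ≤ C * (Real.cosh u)⁻¹) :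
    ‖∫ u, besselKKernel ν x u * g u‖ ≤ C * ∫ u, (Real.cosh u)⁻¹ := by
  rw [← integral_const_mul]
  refine norm_integral_le_of_norm_le (integrable_inv_cosh.const_mul C) (ae_of_all _ fun u => ?_)
  rw [norm_mul]
  exact (mul_le_of_le_one_left (norm_nonneg _) (norm_besselKKernel_le_one hν hx u)).trans (hg u)

-- The weight `1 = cosh⁻² + sinh · (sinh · cosh⁻²)` splits the integral; the second summand is
-- integrated by parts.
theorem mul_two_mul_besselK_eq {x : ℂ} (hx : 0 < x.re) (ν : ℂ) :
    x * (2 * besselK ν x) =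
      x * (∫ u, besselKKernel ν x u * ((Real.cosh u)⁻¹ ^ 2 : ℝ)) +
        ∫ u, besselKKernel ν x u * (ν * (Real.sinh u * (Real.cosh u)⁻¹ ^ 2 : ℝ) +
          (2 * (Real.cosh u)⁻¹ ^ 3 - (Real.cosh u)⁻¹ : ℝ)) := by
  have hcont := continuous_inv_cosh
  have hle_one (u : ℝ) : (Real.cosh u)⁻¹ ≤ 1 := inv_le_one_of_one_le₀ (Real.one_le_cosh u)
  have hbound (u : ℝ) : |Real.sinh u * (Real.cosh u)⁻¹ ^ 2| ≤ 1 :=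
    (abs_sinh_mul_inv_cosh_sq_le u).trans (hle_one u)
  have hbound_sq (u : ℝ) : |(Real.cosh u)⁻¹ ^ 2| ≤ 1 := by
    rw [abs_of_nonneg (sq_nonneg _)]
    exact (inv_cosh_pow_le u two_ne_zero).trans (hle_one u)
  rw [← mul_integral_besselKKernel_mul_sinh hx ν hasDerivAt_sinh_mul_inv_cosh_sq (by fun_prop)
    hbound (fun u => (abs_two_mul_inv_cosh_cube_sub_inv_cosh_le u).trans (hle_one u)),
    ← mul_add, ← integral_add (integrable_besselKKernel_mul_of_bound hx ν (by fun_prop) hbound_sq)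
      (integrable_besselKKernel_mul_sinh_mul_of_bound hx ν (by fun_prop) hbound),
    besselK, ← mul_assoc 2, mul_one_div_cancel two_ne_zero, one_mul]
  congr with u
  have hcosh : (Real.cosh u : ℂ) ≠ 0 := mod_cast (Real.cosh_pos u).ne'
  have hsq : (Real.cosh u : ℂ) ^ 2 = (Real.sinh u : ℂ) ^ 2 + 1 := mod_cast Real.cosh_sq u
  push_cast at hcosh hsq ⊢
  field_simp
  linear_combination besselKKernel ν x u * hsq

theorem norm_besselK_le {ν x : ℂ} (hν : ν.re = 0) (hx : 0 < x.re) :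
    ‖besselK ν x‖ ≤ (∫ u, (Real.cosh u)⁻¹) * (1 + (‖ν‖ + 1) / ‖x‖) := by
  have hxnorm : 0 < ‖x‖ := norm_pos_iff.2 fun h => by simp [h] at hx
  have hfirst := norm_integral_besselKKernel_mul_le (x := x) hν hx.le (C := 1)
    (g := fun u => ((Real.cosh u)⁻¹ ^ 2 : ℝ)) fun u => by
      rw [one_mul, Complex.norm_of_nonneg (sq_nonneg _)]
      exact inv_cosh_pow_le u two_ne_zero
  have hsecond := norm_integral_besselKKernel_mul_le (x := x) hν hx.le (C := ‖ν‖ + 1)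
    (g := fun u => ν * (Real.sinh u * (Real.cosh u)⁻¹ ^ 2 : ℝ) +
      (2 * (Real.cosh u)⁻¹ ^ 3 - (Real.cosh u)⁻¹ : ℝ)) fun u => by
      refine (norm_add_le _ _).trans ?_
      rw [norm_mul, Complex.norm_real, Complex.norm_real, add_one_mul]
      exact add_le_add (mul_le_mul_of_nonneg_left (abs_sinh_mul_inv_cosh_sq_le u) (norm_nonneg ν))
        (abs_two_mul_inv_cosh_cube_sub_inv_cosh_le u)
  have hnorm : ‖x‖ * (2 * ‖besselK ν x‖) ≤
      ‖x‖ * (1 * ∫ u, (Real.cosh u)⁻¹) + (‖ν‖ + 1) * ∫ u, (Real.cosh u)⁻¹ := by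
    rw [← Complex.norm_two, ← norm_mul, ← norm_mul, mul_two_mul_besselK_eq hx ν]
    refine (norm_add_le _ _).trans ?_
    rw [norm_mul]
    gcongr
  rw [one_add_div hxnorm.ne', ← mul_div_assoc, le_div_iff₀ hxnorm]
  linarith [mul_nonneg hxnorm.le (norm_nonneg (besselK ν x))]

theorem Gamma_eq_integral_exp {μ : ℂ} (hμ : 0 < μ.re) :
    Complex.Gamma μ = ∫ v : ℝ, Complex.exp (μ * v - Real.exp v) := by
  have himage := integral_image_eq_integral_abs_deriv_smul MeasurableSet.univ
    (fun v _ => (Real.hasDerivAt_exp v).hasDerivWithinAt) Real.exp_injective.injOn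
    (fun r : ℝ => (Real.exp (-r) : ℂ) * (r : ℂ) ^ (μ - 1))
  rw [image_univ, Real.range_exp, setIntegral_univ] at himage
  rw [Complex.Gamma_eq_integral hμ, Complex.GammaIntegral, himage]
  congr with v
  rw [abs_of_pos (Real.exp_pos v), Complex.real_smul, Complex.cpow_def_of_ne_zero
    (mod_cast (Real.exp_pos v).ne'), ← Complex.ofReal_log (Real.exp_pos v).le, Real.log_exp,
    Complex.ofReal_exp, Complex.ofReal_exp, ← Complex.exp_add, ← Complex.exp_add]
  push_cast
  ring_nf

theorem cpow_mul_besselK {x : ℝ} (hx : 0 < x) (μ : ℂ) :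
    ((x / 2 : ℝ) : ℂ) ^ μ * besselK μ x =
      (1 / 2) * ∫ v : ℝ, Complex.exp (μ * v - Real.exp v - ((x / 2) ^ 2 * Real.exp (-v) : ℝ)) := by
  have hx2 : 0 < x / 2 := half_pos hx
  rw [besselK, mul_left_comm, ← integral_sub_right_eq_self _ (Real.log (x / 2)),
    ← integral_const_mul]
  congr with v
  have hcosh : x * Real.cosh (v - Real.log (x / 2)) =
      Real.exp v + (x / 2) ^ 2 * Real.exp (-v) := by
    rw [Real.cosh_eq, neg_sub, Real.exp_sub, Real.exp_sub, Real.exp_log hx2, Real.exp_neg]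
    field_simp
  rw [besselKKernel, Complex.cpow_def_of_ne_zero (mod_cast hx2.ne'), ← Complex.ofReal_log hx2.le,
    ← Complex.exp_add, ← Complex.ofReal_mul, hcosh]
  push_cast
  ring_nf

theorem tendsto_cpow_mul_besselK {μ : ℂ} (hμ : 0 < μ.re) :
    Tendsto (fun x : ℝ => ((x / 2 : ℝ) : ℂ) ^ μ * besselK μ x) (𝓝[>] 0)
      (𝓝 (Complex.Gamma μ / 2)) := by
  have hint : Integrable fun v : ℝ => Complex.exp (μ * v - Real.exp v) :=
    not_imp_comm.1 integral_undef
      (Gamma_eq_integral_exp hμ ▸ Complex.Gamma_ne_zero_of_re_pos hμ)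
  have hlim : Tendsto (fun x : ℝ => ∫ v : ℝ,
      Complex.exp (μ * v - Real.exp v - ((x / 2) ^ 2 * Real.exp (-v) : ℝ))) (𝓝[>] 0)
      (𝓝 (Complex.Gamma μ)) := by
    rw [Gamma_eq_integral_exp hμ]
    refine tendsto_integral_filter_of_dominated_convergence _
      (Eventually.of_forall fun x => by fun_prop) (Eventually.of_forall fun x => ae_of_all _
      fun v => ?_) hint.norm (ae_of_all _ fun v => ?_)
    · rw [Complex.norm_exp, Complex.norm_exp, Real.exp_le_exp, Complex.sub_re _ (Complex.ofReal _),
        Complex.ofReal_re, sub_le_self_iff]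
      positivity
    · refine Tendsto.mono_left (Continuous.tendsto' (by fun_prop) _ _ ?_) nhdsWithin_le_nhds
      simp
  rw [← one_div_mul_eq_div]
  refine (hlim.const_mul (1 / 2)).congr' ?_
  filter_upwards [self_mem_nhdsWithin] with x hx using (cpow_mul_besselK hx μ).symm

/-! ### The functions `I_ν` -/

/-- The entire function `₀F₁(; ν + 1; w) / Γ(ν + 1) = ∑ wⁿ / (n! Γ(n + 1 + ν))`, in terms of which
`I_ν(x) = (x/2)^ν Φ(x²/4)` and `J_ν(x) = (x/2)^ν Φ(-x²/4)`. -/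
noncomputable def besselSeries (ν : ℂ) : ℂ → ℂ := Complex.regularizedHGFun 0 {ν + 1}

/-- The modified Bessel function of the first kind `I_ν`, with the principal branch of the power. -/
noncomputable def besselI (ν x : ℂ) : ℂ := (x / 2) ^ ν * besselSeries ν (x ^ 2 / 4)

theorem hasFPowerSeriesOnBall_besselSeries (ν : ℂ) : HasFPowerSeriesOnBall (besselSeries ν)
    (Complex.regularizedHGFunSeries 0 {ν + 1}) 0 ⊤ := by
  have hradius := Complex.radius_regularizedHGFunSeries_eq_top (a := 0) (b := {ν + 1}) (by simp)
  rw [← hradius]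
  exact FormalMultilinearSeries.hasFPowerSeriesOnBall _ (by simp [hradius])

theorem regularizedHGFunCoeff_zero_singleton (ν : ℂ) (n : ℕ) :
    Complex.regularizedHGFunCoeff 0 {ν} n = (n.factorial : ℂ)⁻¹ * (Complex.Gamma (n + ν))⁻¹ := by
  simp [Complex.regularizedHGFunCoeff, mul_comm, add_comm]

theorem hasSum_besselSeries (ν w : ℂ) :
    HasSum (fun n : ℕ => (n.factorial : ℂ)⁻¹ * (Complex.Gamma (n + (ν + 1)))⁻¹ * w ^ n)
      (besselSeries ν w) := by
  have hsum := (hasFPowerSeriesOnBall_besselSeries ν).hasSum (y := w) (by simp)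
  simpa only [zero_add, Complex.regularizedHGFunSeries, FormalMultilinearSeries.ofScalars_apply_eq,
    regularizedHGFunCoeff_zero_singleton, smul_eq_mul] using hsum

theorem hasSum_deriv_of_hasFPowerSeriesOnBall {f : ℂ → ℂ} {p : FormalMultilinearSeries ℂ ℂ ℂ}
    (hf : HasFPowerSeriesOnBall f p 0 ⊤) (w : ℂ) :
    HasSum (fun n : ℕ => (n + 1) * p.coeff (n + 1) * w ^ n) (deriv f w) := by
  have hsum := (hf.fderiv.hasSum (y := w) (by simp)).mapL (ContinuousLinearMap.apply ℂ ℂ (1 : ℂ))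
  simpa [FormalMultilinearSeries.apply_eq_pow_smul_coeff, mul_comm, mul_assoc] using hsum

theorem hasDerivAt_besselSeries (ν w : ℂ) :
    HasDerivAt (besselSeries ν) (besselSeries (ν + 1) w) w := by
  have hball := hasFPowerSeriesOnBall_besselSeries ν
  have hdiff : DifferentiableAt ℂ (besselSeries ν) w :=
    hball.differentiableOn.differentiableAt (by simp)
  refine hdiff.hasDerivAt.congr_deriv ((hasSum_deriv_of_hasFPowerSeriesOnBall hball w).unique ?_)
  convert hasSum_besselSeries (ν + 1) w using 3 with n
  rw [Complex.regularizedHGFunSeries_coeff, regularizedHGFunCoeff_zero_singleton,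
    Nat.factorial_succ]
  push_cast
  have hn : (n : ℂ) + 1 ≠ 0 := n.cast_add_one_ne_zero
  rw [mul_inv, ← mul_assoc, mul_inv_cancel_left₀ hn]
  ring_nf

@[fun_prop]
theorem continuous_besselSeries (ν : ℂ) : Continuous (besselSeries ν) :=
  continuous_iff_continuousAt.2 fun w => (hasDerivAt_besselSeries ν w).continuousAt

theorem besselSeries_zero (ν : ℂ) : besselSeries ν 0 = (Complex.Gamma (ν + 1))⁻¹ :=
  (hasSum_besselSeries ν 0).unique
    (by simpa using hasSum_single (f := fun n : ℕ => (n.factorial : ℂ)⁻¹ *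
      (Complex.Gamma (n + (ν + 1)))⁻¹ * 0 ^ n) 0 fun n hn => by simp [hn])

theorem besselSeries_eq_add (ν w : ℂ) :
    besselSeries ν w = (ν + 1) * besselSeries (ν + 1) w + w * besselSeries (ν + 2) w := by
  have hshift : HasSum (fun n : ℕ => n * ((n.factorial : ℂ)⁻¹ *
      (Complex.Gamma (n + (ν + 1 + 1)))⁻¹ * w ^ n)) (w * besselSeries (ν + 2) w) := by
    refine (hasSum_nat_add_iff' 1).1 ?_
    simp only [Finset.range_one, Finset.sum_singleton, Nat.cast_zero, zero_mul, sub_zero]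
    refine ((hasSum_besselSeries (ν + 2) w).mul_left w).congr_fun fun n => ?_
    have hn : (n : ℂ) + 1 ≠ 0 := n.cast_add_one_ne_zero
    rw [Nat.factorial_succ, pow_succ, Nat.cast_mul, mul_inv, Nat.cast_add_one,
      show (n : ℂ) + 1 + (ν + 1 + 1) = n + (ν + 2 + 1) by ring]
    field_simp
  have hsum := ((hasSum_besselSeries (ν + 1) w).mul_left (ν + 1)).add hshift
  refine (hasSum_besselSeries ν w).unique (hsum.congr_fun fun n => ?_)
  have hGamma := Complex.one_div_Gamma_eq_self_mul_one_div_Gamma_add_one (n + (ν + 1))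
  rw [show (n : ℂ) + (ν + 1) + 1 = n + (ν + 1 + 1) by ring] at hGamma
  rw [hGamma]
  ring

theorem hasDerivAt_besselI {x : ℂ} (hx : x ∈ Complex.slitPlane) (ν : ℂ) :
    HasDerivAt (besselI ν) (ν / x * besselI ν x + besselI (ν + 1) x) x := by
  have hx0 : x ≠ 0 := Complex.slitPlane_ne_zero hx
  have hx2 : x / 2 ∈ Complex.slitPlane := by
    simpa [Complex.mem_slitPlane_iff] using hx
  have hpow := ((hasDerivAt_id x).div_const 2).cpow_const (c := ν) hx2
  have hseries := (hasDerivAt_besselSeries ν (x ^ 2 / 4)).comp x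
    ((hasDerivAt_pow 2 x).div_const 4)
  refine (hpow.mul hseries).congr_deriv ?_
  simp only [besselI, Complex.cpow_sub _ _ (div_ne_zero hx0 two_ne_zero), Complex.cpow_add _ _
    (div_ne_zero hx0 two_ne_zero), Complex.cpow_one, id, Function.comp_apply]
  field_simp
  push_cast
  ring

theorem besselI_eq {x : ℂ} (hx : x ≠ 0) (ν : ℂ) :
    besselI ν x = 2 * (ν + 1) / x * besselI (ν + 1) x + besselI (ν + 2) x := by
  have hx2 : x / 2 ≠ 0 := div_ne_zero hx two_ne_zero
  simp only [besselI, besselSeries_eq_add ν, Complex.cpow_add _ _ hx2, Complex.cpow_one,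
    Complex.cpow_ofNat]
  field_simp
  ring

theorem hasDerivAt_besselI_add_one {x : ℂ} (hx : x ∈ Complex.slitPlane) (ν : ℂ) :
    HasDerivAt (besselI (ν + 1)) (besselI ν x - (ν + 1) / x * besselI (ν + 1) x) x := by
  refine (hasDerivAt_besselI hx (ν + 1)).congr_deriv ?_
  rw [besselI_eq (Complex.slitPlane_ne_zero hx) ν, add_assoc, one_add_one_eq_two]
  ring

/-! ### Connection formula -/

/-- Solutions on the right half-plane of the first-order system equivalent to the modified Bessel
equation of order `ν`: `f` is a solution of that equation and `g = f' - (ν/x) f`. Working with the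
system avoids second derivatives in the Wronskian, which becomes `f₁ g₂ - f₂ g₁`. -/
structure IsBesselPair (ν : ℂ) (f g : ℂ → ℂ) : Prop where
  hasDerivAt_fst : ∀ {x : ℂ}, 0 < x.re → HasDerivAt f (ν / x * f x + g x) x
  hasDerivAt_snd : ∀ {x : ℂ}, 0 < x.re → HasDerivAt g (f x - (ν + 1) / x * g x) x

theorem isBesselPair_besselK (ν : ℂ) :
    IsBesselPair ν (besselK ν) (fun x => -besselK (ν + 1) x) where
  hasDerivAt_fst hx := (hasDerivAt_besselK hx ν).congr_deriv (by ring)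
  hasDerivAt_snd hx := (hasDerivAt_besselK_add_one hx ν).fun_neg.congr_deriv (by ring)

theorem isBesselPair_besselI (ν : ℂ) : IsBesselPair ν (besselI ν) (besselI (ν + 1)) where
  hasDerivAt_fst hx := hasDerivAt_besselI (.inl hx) ν
  hasDerivAt_snd hx := hasDerivAt_besselI_add_one (.inl hx) ν

theorem isBesselPair_besselI_neg (ν : ℂ) :
    IsBesselPair ν (besselI (-ν)) (besselI (-ν - 1)) where
  hasDerivAt_fst hx := by
    have hderiv := hasDerivAt_besselI_add_one (.inl hx) (-ν - 1)
    rw [sub_add_cancel] at hderiv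
    exact hderiv.congr_deriv (by ring)
  hasDerivAt_snd hx := by
    have hderiv := hasDerivAt_besselI (.inl hx) (-ν - 1)
    rw [sub_add_cancel] at hderiv
    exact hderiv.congr_deriv (by ring)

namespace IsBesselPair

variable {ν : ℂ} {f₁ g₁ f₂ g₂ : ℂ → ℂ}

theorem hasDerivAt_mul_wronskian (h₁ : IsBesselPair ν f₁ g₁) (h₂ : IsBesselPair ν f₂ g₂) {x : ℂ}
    (hx : 0 < x.re) : HasDerivAt (fun x => x * (f₁ x * g₂ x - f₂ x * g₁ x)) 0 x := by
  have hx0 : x ≠ 0 := fun h => by simp [h] at hx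
  have hwronskian := ((h₁.hasDerivAt_fst hx).fun_mul (h₂.hasDerivAt_snd hx)).fun_sub
    ((h₂.hasDerivAt_fst hx).fun_mul (h₁.hasDerivAt_snd hx))
  refine ((hasDerivAt_id' x).fun_mul hwronskian).congr_deriv ?_
  field_simp
  ring

theorem mul_wronskian_eq_of_tendsto (h₁ : IsBesselPair ν f₁ g₁) (h₂ : IsBesselPair ν f₂ g₂) {c : ℂ}
    (hc : Tendsto (fun r : ℝ => r * (f₁ r * g₂ r - f₂ r * g₁ r)) (𝓝[>] 0) (𝓝 c)) {x : ℂ}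
    (hx : 0 < x.re) : x * (f₁ x * g₂ x - f₂ x * g₁ x) = c := by
  have hderiv {y : ℂ} (hy : 0 < y.re) := h₁.hasDerivAt_mul_wronskian h₂ hy
  refine tendsto_nhds_unique (tendsto_const_nhds.congr' ?_) hc
  filter_upwards [self_mem_nhdsWithin] with r hr
  refine (isOpen_lt continuous_const Complex.continuous_re).is_const_of_deriv_eq_zero
    (convex_halfSpace_re_gt 0).isPreconnected
    (fun y hy => (hderiv hy).differentiableAt.differentiableWithinAt)
    (fun y hy => (hderiv hy).deriv) hx ?_
  simpa using hr

end IsBesselPair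

theorem mul_besselI_mul_besselI_sub {ν x : ℂ} (hx : 0 < x.re) :
    x * (besselI ν x * besselI (-ν - 1) x - besselI (-ν) x * besselI (ν + 1) x) =
      -(2 * Complex.sin (π * ν) / π) := by
  refine (isBesselPair_besselI ν).mul_wronskian_eq_of_tendsto (isBesselPair_besselI_neg ν) ?_ hx
  have hlim : Tendsto (fun r : ℝ => 2 * (besselSeries ν (r ^ 2 / 4) *
      besselSeries (-ν - 1) (r ^ 2 / 4)) - r ^ 2 / 2 * (besselSeries (-ν) (r ^ 2 / 4) *
      besselSeries (ν + 1) (r ^ 2 / 4))) (𝓝[>] 0) (𝓝 (-(2 * Complex.sin (π * ν) / π))) := by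
    refine (Continuous.tendsto' (by fun_prop) _ _ ?_).mono_left nhdsWithin_le_nhds
    have hreflection := Complex.Gamma_mul_Gamma_one_sub (-ν)
    rw [mul_neg, Complex.sin_neg, sub_neg_eq_add, add_comm] at hreflection
    simp only [Complex.ofReal_zero, zero_pow two_ne_zero, zero_div, zero_mul, sub_zero,
      besselSeries_zero, sub_add_cancel]
    rw [← mul_inv, mul_comm (Complex.Gamma _), hreflection, inv_div]
    ring
  refine hlim.congr' ?_
  filter_upwards [self_mem_nhdsWithin] with r hr
  have hr0 : (r : ℂ) ≠ 0 := mod_cast (mem_Ioi.1 hr).ne'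
  have hr2 : (r : ℂ) / 2 ≠ 0 := div_ne_zero hr0 two_ne_zero
  have hpow : ((r : ℂ) / 2) ^ ν ≠ 0 := by simp [Complex.cpow_eq_zero_iff, hr2]
  simp only [besselI, Complex.cpow_sub _ _ hr2, Complex.cpow_add _ _ hr2, Complex.cpow_one,
    Complex.cpow_neg]
  field_simp

theorem norm_cpow_of_re_eq_zero {r : ℝ} (hr : 0 < r) {ν : ℂ} (hν : ν.re = 0) :
    ‖(r : ℂ) ^ ν‖ = 1 := by
  rw [Complex.norm_cpow_eq_rpow_re_of_pos hr, hν, Real.rpow_zero]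

theorem tendsto_cpow_mul_sq_mul_besselK {ν : ℂ} (hν : ν.re = 0) :
    Tendsto (fun r : ℝ => ((r / 2 : ℝ) : ℂ) ^ ν * (r ^ 2 * besselK ν r)) (𝓝[>] 0) (𝓝 0) := by
  set C := ∫ u : ℝ, (Real.cosh u)⁻¹
  have hlim : Tendsto (fun r : ℝ => C * (r ^ 2 + r * (‖ν‖ + 1))) (𝓝[>] 0) (𝓝 0) :=
    (Continuous.tendsto' (by fun_prop) _ _ (by simp)).mono_left nhdsWithin_le_nhds
  refine squeeze_zero_norm' ?_ hlim
  filter_upwards [self_mem_nhdsWithin] with r hr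
  have hr : 0 < r := hr
  have hbound := norm_besselK_le hν (x := r) (by simpa using hr)
  rw [Complex.norm_of_nonneg hr.le] at hbound
  calc ‖((r / 2 : ℝ) : ℂ) ^ ν * (r ^ 2 * besselK ν r)‖ = r ^ 2 * ‖besselK ν r‖ := by
        rw [norm_mul, norm_cpow_of_re_eq_zero (half_pos hr) hν, one_mul, norm_mul, norm_pow,
          Complex.norm_of_nonneg hr.le]
    _ ≤ r ^ 2 * (C * (1 + (‖ν‖ + 1) / r)) := by gcongr
    _ = C * (r ^ 2 + r * (‖ν‖ + 1)) := by field_simp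

theorem mul_besselK_mul_besselI_add {ν x : ℂ} (hν : ν.re = 0) (hx : 0 < x.re) :
    x * (besselK ν x * besselI (ν + 1) x + besselI ν x * besselK (ν + 1) x) = 1 := by
  simp only [← sub_neg_eq_add (besselK ν x * _), ← mul_neg]
  refine (isBesselPair_besselK ν).mul_wronskian_eq_of_tendsto (isBesselPair_besselI ν) ?_ hx
  have hseries (μ : ℂ) : Tendsto (fun r : ℝ => besselSeries μ (r ^ 2 / 4)) (𝓝[>] 0)
      (𝓝 (Complex.Gamma (μ + 1))⁻¹) :=
    (Continuous.tendsto' (by fun_prop) _ _ (by simp [besselSeries_zero])).mono_left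
      nhdsWithin_le_nhds
  have hν1 : 0 < (ν + 1).re := by simp [hν]
  have hlim := (((hseries (ν + 1)).mul (tendsto_cpow_mul_sq_mul_besselK hν)).div_const 2).add
    (((hseries ν).mul (tendsto_cpow_mul_besselK hν1)).const_mul 2)
  have hone : (Complex.Gamma (ν + 1 + 1))⁻¹ * 0 / 2 +
      2 * ((Complex.Gamma (ν + 1))⁻¹ * (Complex.Gamma (ν + 1) / 2)) = 1 := by
    have := Complex.Gamma_ne_zero_of_re_pos hν1
    field_simp
    ring
  rw [hone] at hlim
  refine hlim.congr' ?_
  filter_upwards [self_mem_nhdsWithin] with r hr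
  have hr2 : (r : ℂ) / 2 ≠ 0 := div_ne_zero (mod_cast (mem_Ioi.1 hr).ne') two_ne_zero
  simp only [besselI, Complex.ofReal_div, Complex.ofReal_ofNat, Complex.cpow_add _ _ hr2,
    Complex.cpow_one]
  ring

theorem mul_besselK_mul_besselI_neg_add {ν x : ℂ} (hν : ν.re = 0) (hx : 0 < x.re) :
    x * (besselK ν x * besselI (-ν - 1) x + besselI (-ν) x * besselK (ν + 1) x) = 1 := by
  have hx0 : x ≠ 0 := fun h => by simp [h] at hx
  have hwronskian := mul_besselK_mul_besselI_add (ν := -ν) (by simpa using hν) hx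
  have hK := mul_besselK_eq hx ν
  have hI := besselI_eq hx0 (-ν - 1)
  rw [besselK_neg, ← besselK_neg (-ν + 1), neg_add, neg_neg, ← sub_eq_add_neg] at hwronskian
  rw [sub_add_cancel, show -ν - 1 + 2 = -ν + 1 by ring] at hI
  rw [hI]
  field_simp
  linear_combination hwronskian - 2 * besselI (-ν) x * hK

theorem besselK_mul_sin {ν x : ℂ} (hν : ν.re = 0) (hx : 0 < x.re) :
    besselK ν x * Complex.sin (π * ν) = π / 2 * (besselI (-ν) x - besselI ν x) := by
  have hKI := mul_besselK_mul_besselI_add hν hx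
  have hKI' := mul_besselK_mul_besselI_neg_add hν hx
  have hII := mul_besselI_mul_besselI_sub (ν := ν) hx
  have hpi : (π : ℂ) ≠ 0 := mod_cast Real.pi_ne_zero
  rw [← neg_div, eq_div_iff hpi] at hII
  linear_combination (besselK ν x / 2) * hII + (π / 2) * besselI (-ν) x * hKI
    - (π / 2) * besselI ν x * hKI'

/-! ### Boundary values on the imaginary axis -/

theorem besselJ_eq_cpow_mul_besselSeries {y : ℝ} (hy : 0 < y) (ν : ℂ) :
    besselJ ν y = ((y / 2 : ℝ) : ℂ) ^ ν * besselSeries ν (-(y ^ 2 / 4)) := by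
  have hy2 : ((y / 2 : ℝ) : ℂ) ≠ 0 := mod_cast (half_pos hy).ne'
  rw [← ((hasSum_besselSeries ν _).mul_left _).tsum_eq, besselJ]
  congr with n
  rw [Complex.ofReal_log (half_pos hy).le, mul_comm (ν + 2 * n), ← Complex.cpow_def_of_ne_zero hy2,
    Complex.cpow_add _ _ hy2, mul_comm 2 (n : ℂ), Complex.cpow_nat_mul, Complex.cpow_ofNat,
    Complex.Gamma_nat_eq_factorial, add_assoc, add_comm 1 ν,
    show -((y : ℂ) ^ 2 / 4) = -1 * ((y / 2 : ℝ) : ℂ) ^ 2 by push_cast; ring, mul_pow,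
    div_eq_mul_inv, mul_inv]
  ring

theorem besselI_ofReal_mul {y : ℝ} (hy : 0 < y) {w : ℂ} (hw : w ^ 2 = -1) (ν : ℂ) :
    besselI ν (y * w) = w ^ ν * besselJ ν y := by
  have hw0 : w ≠ 0 := fun h => by simp [h] at hw
  have hy2 : ((y / 2 : ℝ) : ℂ) ≠ 0 := mod_cast (half_pos hy).ne'
  rw [besselI, besselJ_eq_cpow_mul_besselSeries hy, mul_div_right_comm, mul_pow, hw,
    show (y : ℂ) / 2 = ((y / 2 : ℝ) : ℂ) by push_cast; rfl,
    Complex.cpow_def_of_ne_zero (mul_ne_zero hy2 hw0), Complex.log_ofReal_mul (half_pos hy) hw0,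
    Complex.cpow_def_of_ne_zero hw0, Complex.cpow_def_of_ne_zero hy2, ← mul_assoc,
    ← Complex.exp_add, Complex.ofReal_log (half_pos hy).le]
  ring_nf

theorem tendsto_besselK_ofReal_mul {ν : ℂ} (hν : ν.re = 0) (hsin : Complex.sin (π * ν) ≠ 0) {y : ℝ}
    (hy : 0 < y) {w : ℂ} (hw : w ^ 2 = -1) (hwslit : w ∈ Complex.slitPlane) :
    Tendsto (besselK ν) (𝓝[{x | 0 < x.re}] (y * w)) (𝓝 (π / (2 * Complex.sin (π * ν)) *
      (w ^ (-ν) * besselJ (-ν) y - w ^ ν * besselJ ν y))) := by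
  have hyw : (y * w : ℂ) ∈ Complex.slitPlane := by
    simpa [Complex.mem_slitPlane_iff, hy, hy.ne'] using hwslit
  have hI (μ : ℂ) : Tendsto (besselI μ) (𝓝[{x | 0 < x.re}] (y * w)) (𝓝 (w ^ μ * besselJ μ y)) := by
    rw [← besselI_ofReal_mul hy hw]
    exact (hasDerivAt_besselI hyw μ).continuousAt.mono_left nhdsWithin_le_nhds
  refine (((hI (-ν)).sub (hI ν)).const_mul (π / (2 * Complex.sin (π * ν)))).congr' ?_
  filter_upwards [self_mem_nhdsWithin] with x hx
  have hconnection := besselK_mul_sin hν hx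
  field_simp
  linear_combination -2 * hconnection

theorem I_cpow_add_neg_I_cpow (ν : ℂ) :
    Complex.I ^ ν + (-Complex.I) ^ ν = 2 * Complex.cos (π * ν / 2) := by
  rw [Complex.cpow_def_of_ne_zero Complex.I_ne_zero,
    Complex.cpow_def_of_ne_zero (neg_ne_zero.2 Complex.I_ne_zero), Complex.log_I,
    Complex.log_neg_I, Complex.two_cos]
  ring_nf

theorem kplus_half_add_half (y : ℝ) (ν : ℂ) :
    kplus y (1 / 2 + ν / 2) =
      (besselJ (-ν) y - besselJ ν y) / (2 * Complex.sin (π * ν / 2)) := by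
  rw [kplus, show 2 * (1 / 2 + ν / 2) - 1 = ν by ring, show 1 - 2 * (1 / 2 + ν / 2) = -ν by ring,
    show π * (1 / 2 + ν / 2) = π * ν / 2 + π / 2 by ring, Complex.cos_add_pi_div_two, mul_neg,
    div_neg, ← neg_div, neg_sub]

theorem kplus_half_add_half_eq_add {ν : ℂ} (hsin : Complex.sin (π * ν) ≠ 0) (y : ℝ) :
    kplus y (1 / 2 + ν / 2) = (1 / π) *
      (π / (2 * Complex.sin (π * ν)) *
          (Complex.I ^ (-ν) * besselJ (-ν) y - Complex.I ^ ν * besselJ ν y) +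
        π / (2 * Complex.sin (π * ν)) *
          ((-Complex.I) ^ (-ν) * besselJ (-ν) y - (-Complex.I) ^ ν * besselJ ν y)) := by
  have hdouble : Complex.sin (π * ν) = 2 * Complex.sin (π * ν / 2) * Complex.cos (π * ν / 2) := by
    rw [← Complex.sin_two_mul, mul_div_cancel₀ _ two_ne_zero]
  have hcos := I_cpow_add_neg_I_cpow ν
  have hcos' := I_cpow_add_neg_I_cpow (-ν)
  rw [mul_neg, neg_div, Complex.cos_neg] at hcos'
  rw [hdouble] at hsin
  rw [kplus_half_add_half, hdouble]
  generalize Complex.sin (π * ν / 2) = s, Complex.cos (π * ν / 2) = c at *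
  have hs : s ≠ 0 := fun h => hsin (by rw [h, mul_zero, zero_mul])
  have hc : c ≠ 0 := right_ne_zero_of_mul hsin
  have hpi : (π : ℂ) ≠ 0 := mod_cast Real.pi_ne_zero
  field_simp
  linear_combination besselJ ν y * hcos - besselJ (-ν) y * hcos'

theorem tendsto_besselK_add_besselK {ν : ℂ} (hν : ν.re = 0) (hsin : Complex.sin (π * ν) ≠ 0)
    {y c : ℝ} (hy : 0 < y) (hc : 0 < c) :
    Tendsto (fun ε : ℝ => (1 / π : ℂ) * (besselK ν ((ε + c * Complex.I) * y) +
        besselK ν ((ε - c * Complex.I) * y)))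
      (𝓝[>] 0) (𝓝 (kplus (y * c) (1 / 2 + ν / 2))) := by
  have hpath (w : ℂ) (hw : w.re = 0) : Tendsto (fun ε : ℝ => (ε + c * w) * y) (𝓝[>] 0)
      (𝓝[{x | 0 < x.re}] ((y * c : ℝ) * w)) := by
    refine tendsto_nhdsWithin_iff.2 ⟨(Continuous.tendsto' (by fun_prop) _ _ ?_).mono_left
      nhdsWithin_le_nhds, ?_⟩
    · push_cast
      ring
    · filter_upwards [self_mem_nhdsWithin] with ε hε
      simpa [hw] using mul_pos hε hy
  have hlim {w : ℂ} (hw : w.re = 0) (hw2 : w ^ 2 = -1) (hwslit : w ∈ Complex.slitPlane) :=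
    (tendsto_besselK_ofReal_mul hν hsin (mul_pos hy hc) hw2 hwslit).comp (hpath w hw)
  have hsum := ((hlim Complex.I_re Complex.I_sq (by simp [Complex.mem_slitPlane_iff])).add
    (hlim (w := -Complex.I) (by simp) (by simp) (by simp [Complex.mem_slitPlane_iff]))).const_mul
      (1 / π : ℂ)
  convert hsum using 2
  · simp [sub_eq_add_neg]
  · exact kplus_half_add_half_eq_add hsin (y * c)

/-! ### Bessel's integral for integral order -/

section circleAverage

variable {E : Type*} [NormedAddCommGroup E] [NormedSpace ℝ E] {c : ℂ} {R : ℝ}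

theorem norm_circleAverage_le {f : ℂ → E} {C : ℝ} (hf : ∀ z ∈ Metric.sphere c |R|, ‖f z‖ ≤ C) :
    ‖Real.circleAverage f c R‖ ≤ C := by
  have hint := intervalIntegral.norm_integral_le_of_norm_le_const (a := 0) (b := 2 * π)
    fun θ _ => hf _ (circleMap_mem_sphere' c R θ)
  rw [Real.circleAverage, norm_smul, Real.norm_of_nonneg (inv_nonneg.2 Real.two_pi_pos.le),
    inv_mul_le_iff₀ Real.two_pi_pos]
  simpa [abs_of_pos Real.pi_pos, mul_comm] using hint

theorem hasSum_circleAverage_of_summable_norm {F : ℕ → ℂ → E} {f : ℂ → E} {bound : ℕ → ℝ}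
    (hF : ∀ n, ContinuousOn (F n) (Metric.sphere c |R|))
    (hbound : ∀ n, ∀ z ∈ Metric.sphere c |R|, ‖F n z‖ ≤ bound n) (hsum : Summable bound)
    (hf : ∀ z ∈ Metric.sphere c |R|, HasSum (F · z) (f z)) :
    HasSum (fun n => Real.circleAverage (F n) c R) (Real.circleAverage f c R) := by
  have hmem := circleMap_mem_sphere' c R
  refine (intervalIntegral.hasSum_integral_of_dominated_convergence (fun n _ => bound n)
    (fun n => ((hF n).comp_continuous (continuous_circleMap c R) hmem).aestronglyMeasurable)
    (fun n => ae_of_all _ fun θ _ => hbound n _ (hmem θ)) (ae_of_all _ fun θ _ => hsum)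
    intervalIntegrable_const (ae_of_all _ fun θ _ => hf _ (hmem θ))).const_smul _

end circleAverage

theorem ne_zero_of_mem_unitSphere {ζ : ℂ} (hζ : ζ ∈ Metric.sphere (0 : ℂ) |1|) : ζ ≠ 0 :=
  ne_zero_of_mem_sphere (by simp) ⟨ζ, hζ⟩

theorem hasSum_cexp (z : ℂ) : HasSum (fun n : ℕ => z ^ n / n.factorial) (Complex.exp z) := by
  rw [Complex.exp_eq_exp_ℂ]
  exact NormedSpace.expSeries_div_hasSum_exp z

theorem circleAverage_pow_mul_exp_mul_inv (n : ℕ) (a : ℂ) :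
    Real.circleAverage (fun ζ => ζ ^ n * Complex.exp (a * ζ⁻¹)) 0 1 = a ^ n / n.factorial := by
  have hcauchy := (Differentiable.diffContOnCl (𝕜 := ℂ) (f := fun ζ : ℂ => Complex.exp (a * ζ))
    (by fun_prop)).circleIntegral_one_div_sub_center_pow_smul (c := 0) one_pos n
  simp only [iteratedDeriv_cexp_const_mul, mul_zero, Complex.exp_zero, mul_one] at hcauchy
  rw [← Real.circleAverage_zero_one_congr_inv, Real.circleAverage_eq_circleIntegral one_ne_zero,
    inv_smul_eq_iff₀ Complex.two_pi_I_ne_zero, smul_eq_mul, ← mul_div_assoc, mul_div_right_comm,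
    ← smul_eq_mul (_ / _), ← hcauchy]
  congr with ζ
  simp only [inv_inv, sub_zero, smul_eq_mul, one_div, pow_succ, mul_inv, inv_pow]
  ring

theorem besselJ_natCast_eq_circleAverage (n : ℕ) {y : ℝ} (hy : 0 < y) :
    besselJ n y =
      Real.circleAverage (fun ζ => ζ ^ n * Complex.exp (y / 2 * (ζ⁻¹ - ζ))) 0 1 := by
  have hsum : HasSum (fun m : ℕ => Real.circleAverage (fun ζ => ((-(y / 2 : ℂ)) ^ m / m.factorial) •
      (ζ ^ (n + m) * Complex.exp (y / 2 * ζ⁻¹))) 0 1)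
      (Real.circleAverage (fun ζ => ζ ^ n * Complex.exp (y / 2 * (ζ⁻¹ - ζ))) 0 1) := by
    refine hasSum_circleAverage_of_summable_norm
      (bound := fun m => (y / 2) ^ m / m.factorial * Real.exp (y / 2)) (fun m => ?_)
      (fun m ζ hζ => ?_) ((Real.summable_pow_div_factorial _).mul_right _) (fun ζ _ => ?_)
    · have hne := @ne_zero_of_mem_unitSphere
      fun_prop (disch := assumption)
    · have hζ : ‖ζ‖ = 1 := by simpa using hζ
      have hexp : ‖Complex.exp (y / 2 * ζ⁻¹)‖ ≤ Real.exp (y / 2) := by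
        refine (Complex.norm_exp_le_exp_norm _).trans_eq ?_
        simp [hζ, abs_of_pos hy]
      simpa [hζ, abs_of_pos hy] using mul_le_mul_of_nonneg_left hexp
        (by positivity : 0 ≤ (y / 2) ^ m / m.factorial)
    · have hexp := (hasSum_cexp (-(y / 2) * ζ)).mul_right (ζ ^ n * Complex.exp (y / 2 * ζ⁻¹))
      rw [mul_left_comm, ← Complex.exp_add, show -(y / 2) * ζ + y / 2 * ζ⁻¹ = y / 2 * (ζ⁻¹ - ζ) by
        ring] at hexp
      refine hexp.congr_fun fun m => ?_
      rw [smul_eq_mul, mul_pow, pow_add]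
      ring
  simp only [Real.circleAverage_fun_smul, circleAverage_pow_mul_exp_mul_inv] at hsum
  rw [← hsum.tsum_eq, besselJ_eq_cpow_mul_besselSeries hy, ← (hasSum_besselSeries _ _).tsum_eq,
    ← tsum_mul_left]
  congr with m
  rw [Complex.cpow_natCast, show (m + (n + 1) : ℂ) = ((n + m : ℕ) : ℂ) + 1 by push_cast; ring,
    Complex.Gamma_nat_eq_factorial, show -((y : ℂ) ^ 2 / 4) = -(y / 2) * (y / 2) by ring, mul_pow,
    smul_eq_mul]
  push_cast
  ring

theorem half_mul_inv_sub_self (y : ℝ) {ζ : ℂ} (hζ : ‖ζ‖ = 1) :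
    y / 2 * (ζ⁻¹ - ζ) = Complex.I * ((-(y * ζ.im) : ℝ) : ℂ) := by
  have hconj := Complex.sub_conj ζ
  rw [← Complex.inv_eq_conj hζ] at hconj
  push_cast at hconj ⊢
  linear_combination (-y / 2 : ℂ) * hconj

theorem norm_besselJ_natCast_le_one (n : ℕ) {y : ℝ} (hy : 0 < y) : ‖besselJ n y‖ ≤ 1 := by
  rw [besselJ_natCast_eq_circleAverage n hy]
  refine norm_circleAverage_le fun ζ hζ => ?_
  have hζ : ‖ζ‖ = 1 := by simpa using hζ
  rw [norm_mul, norm_pow, hζ, one_pow, one_mul, half_mul_inv_sub_self y hζ,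
    Complex.norm_exp_I_mul_ofReal]

theorem continuousOn_besselJ (ν : ℂ) : ContinuousOn (besselJ ν) (Ioi 0) := by
  refine ContinuousOn.congr ?_ fun y hy => besselJ_eq_cpow_mul_besselSeries hy ν
  refine ContinuousOn.mul (ContinuousOn.cpow_const (by fun_prop) fun y hy => .inl ?_)
    (by fun_prop)
  simpa using hy

theorem norm_besselJ_natCast_le {n : ℕ} (hn : n ≠ 0) {y : ℝ} (hy : 0 < y) : ‖besselJ n y‖ ≤ y := by
  have hcont : ContinuousOn (fun ζ : ℂ => ζ ^ n * Complex.exp (y / 2 * (ζ⁻¹ - ζ)))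
      (Metric.sphere 0 |1|) := by
    have hne := @ne_zero_of_mem_unitSphere
    fun_prop (disch := assumption)
  have hzero : Real.circleAverage (fun ζ : ℂ => ζ ^ n) 0 1 = 0 := by
    rw [(Differentiable.diffContOnCl (𝕜 := ℂ) (by fun_prop)).circleAverage, zero_pow hn]
  have hpow : CircleIntegrable (fun ζ : ℂ => ζ ^ n) 0 1 :=
    (Continuous.continuousOn (by fun_prop)).circleIntegrable'
  have hdiff := Real.circleAverage_fun_sub hcont.circleIntegrable' hpow
  rw [hzero, sub_zero] at hdiff
  rw [besselJ_natCast_eq_circleAverage n hy, ← hdiff]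
  refine norm_circleAverage_le fun ζ hζ => ?_
  have hζ : ‖ζ‖ = 1 := by simpa using hζ
  rw [← mul_sub_one, norm_mul, norm_pow, hζ, one_pow, one_mul, half_mul_inv_sub_self y hζ]
  refine Real.norm_exp_I_mul_ofReal_sub_one_le.trans ?_
  rw [norm_neg, norm_mul, Real.norm_of_nonneg hy.le]
  exact mul_le_of_le_one_right hy.le (hζ ▸ Complex.abs_im_le_norm ζ)

/-! ### The Laplace transform of `J_n` -/

theorem circleAverage_integral {α E : Type*} [MeasurableSpace α] [NormedAddCommGroup E]
    [NormedSpace ℝ E] {μ : Measure α} [SFinite μ] {c : ℂ} {R : ℝ} {F : α → ℂ → E}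
    (hF : Integrable (Function.uncurry fun θ x => F x (circleMap c R θ))
      ((volume.restrict (uIoc 0 (2 * π))).prod μ)) :
    Real.circleAverage (fun ζ => ∫ x, F x ζ ∂μ) c R = ∫ x, Real.circleAverage (F x) c R ∂μ := by
  simp only [Real.circleAverage, intervalIntegral_integral_swap hF, integral_smul]

/-- The Laplace transform `∫₀^∞ e^{-py} J_n(y) dy` of `J_n`. -/
noncomputable def laplaceBesselJ (n : ℕ) (p : ℂ) : ℂ :=
  ∫ y : ℝ in Ioi 0, Complex.exp (-(p * y)) * besselJ n y

theorem half_inv_sub_self_re {ζ : ℂ} (hζ : ‖ζ‖ = 1) : ((ζ⁻¹ - ζ) / 2).re = 0 := by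
  rw [Complex.inv_eq_conj hζ]
  simp

theorem laplaceBesselJ_eq_circleAverage (n : ℕ) {p : ℂ} (hp : 0 < p.re) :
    laplaceBesselJ n p = Real.circleAverage (fun ζ => ζ ^ n / (p - (ζ⁻¹ - ζ) / 2)) 0 1 := by
  set F : ℝ → ℂ → ℂ := fun y ζ => ζ ^ n * Complex.exp (-(p - (ζ⁻¹ - ζ) / 2) * y) with hFdef
  have hre : ∀ ζ ∈ Metric.sphere (0 : ℂ) |1|, (-(p - (ζ⁻¹ - ζ) / 2)).re = -p.re := fun ζ hζ => by
    rw [Complex.neg_re, Complex.sub_re, half_inv_sub_self_re (by simpa using hζ), sub_zero]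
  have hF : Integrable (Function.uncurry fun θ y => F y (circleMap 0 1 θ))
      ((volume.restrict (uIoc 0 (2 * π))).prod (volume.restrict (Ioi 0))) := by
    have hone : Integrable (fun _ => (1 : ℝ)) (volume.restrict (uIoc 0 (2 * π))) :=
      (intervalIntegrable_const (a := 0) (b := 2 * π)).def'
    have hexp : IntegrableOn (fun y => Real.exp (-p.re * y)) (Ioi 0) :=
      integrableOn_exp_mul_Ioi (neg_lt_zero.2 hp) 0
    refine (hone.mul_prod hexp).mono' ?_ (ae_of_all _ fun x => ?_)
    · have hne : ∀ x : ℝ × ℝ, circleMap 0 1 x.1 ≠ 0 := fun x => circleMap_ne_center one_ne_zero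
      refine Continuous.aestronglyMeasurable ?_
      simp only [Function.uncurry_def, hFdef]
      fun_prop (disch := assumption)
    · simp only [Function.uncurry, hFdef, norm_mul, norm_pow, Complex.norm_exp,
        Complex.re_mul_ofReal, hre _ (circleMap_mem_sphere' 0 1 x.1)]
      simp
  have hJ : ∀ y ∈ Ioi (0 : ℝ),
      Complex.exp (-(p * y)) * besselJ n y = Real.circleAverage (F y) 0 1 := fun y hy => by
    rw [besselJ_natCast_eq_circleAverage n hy, ← smul_eq_mul, ← Real.circleAverage_fun_smul]
    refine Real.circleAverage_congr_sphere fun ζ _ => ?_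
    simp only [hFdef, smul_eq_mul]
    rw [mul_left_comm, ← Complex.exp_add]
    ring_nf
  rw [laplaceBesselJ, setIntegral_congr_fun measurableSet_Ioi hJ, ← circleAverage_integral hF]
  refine Real.circleAverage_congr_sphere fun ζ hζ => ?_
  simp only [hFdef]
  rw [integral_const_mul, integral_exp_mul_complex_Ioi (hre ζ hζ ▸ neg_lt_zero.2 hp),
    Complex.ofReal_zero, mul_zero, Complex.exp_zero, neg_div_neg_eq, mul_one_div]

theorem sinh_re (w : ℂ) : (Complex.sinh w).re = Real.sinh w.re * Real.cos w.im := by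
  conv_lhs => rw [← Complex.re_add_im w]
  rw [Complex.sinh_add, Complex.sinh_mul_I, Complex.cosh_mul_I]
  simp [Complex.sinh_ofReal_re, Complex.cos_ofReal_re]

theorem exists_sinh_eq_of_re_pos {p : ℂ} (hp : 0 < p.re) :
    ∃ w : ℂ, 0 < w.re ∧ Complex.sinh w = p := by
  obtain ⟨v, hv⟩ := Complex.sin_surjective (p * Complex.I)
  have hsinh : Complex.sinh (-(v * Complex.I)) = p := by
    rw [Complex.sinh_neg, Complex.sinh_mul_I, hv, mul_assoc, Complex.I_mul_I]
    ring
  rcases lt_trichotomy 0 (-(v * Complex.I)).re with hpos | hzero | hneg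
  · exact ⟨_, hpos, hsinh⟩
  · rw [← hsinh, sinh_re, ← hzero, Real.sinh_zero, zero_mul] at hp
    exact absurd hp (lt_irrefl 0)
  · refine ⟨v * Complex.I + π * Complex.I, by simpa using hneg, ?_⟩
    rw [Complex.sinh_add_pi_mul_I, ← Complex.sinh_neg, hsinh]

theorem laplaceBesselJ_sinh (n : ℕ) {w : ℂ} (hw : 0 < w.re) (hp : 0 < (Complex.sinh w).re) :
    laplaceBesselJ n (Complex.sinh w) = Complex.exp (-(n * w)) / Complex.cosh w := by
  have hball : Complex.exp (-w) ∈ Metric.ball (0 : ℂ) |1| := by simpa [Complex.norm_exp] using hw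
  have hne : ∀ ζ ∈ closure (Metric.ball (0 : ℂ) |1|), ζ + Complex.exp w ≠ 0 := fun ζ hζ h => by
    have hnorm : ‖ζ‖ = Real.exp w.re := by
      rw [eq_neg_of_add_eq_zero_left h, norm_neg, Complex.norm_exp]
    have hle : ‖ζ‖ ≤ 1 := by simpa using Metric.closure_ball_subset_closedBall hζ
    exact (hnorm ▸ hle).not_gt (Real.one_lt_exp_iff.2 hw)
  have hcauchy := DiffContOnCl.circleAverage_smul_div
    (f := fun ζ : ℂ => 2 * ζ ^ n / (ζ + Complex.exp w))
    (DifferentiableOn.diffContOnCl (by fun_prop (disch := assumption))) hball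
  rw [laplaceBesselJ_eq_circleAverage n hp]
  refine (Real.circleAverage_congr_sphere fun ζ hζ => ?_).trans (hcauchy.trans ?_)
  · have hζ0 := ne_zero_of_mem_unitSphere hζ
    have hfactor : Complex.sinh w - (ζ⁻¹ - ζ) / 2 =
        (ζ - Complex.exp (-w)) * (ζ + Complex.exp w) / (2 * ζ) := by
      have hexp : Complex.exp (-w) * Complex.exp w = 1 := by rw [← Complex.exp_add]; simp
      rw [Complex.sinh]
      field_simp
      linear_combination hexp
    rw [hfactor, smul_eq_mul, sub_zero, div_mul_div_comm, div_div_eq_mul_div]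
    ring
  · rw [Complex.cosh, ← Complex.exp_nat_mul, mul_neg, div_div_eq_mul_div, mul_comm 2,
      add_comm (Complex.exp w)]

theorem norm_sinh_le (w : ℂ) : ‖Complex.sinh w‖ ≤ Real.cosh w.re := by
  rw [Complex.sinh, Real.cosh_eq, norm_div, Complex.norm_ofNat]
  gcongr
  exact (norm_sub_le _ _).trans_eq (by rw [Complex.norm_exp, Complex.norm_exp, Complex.neg_re])

theorem abs_sq_im_sub_one_le (p : ℂ) : |p.im ^ 2 - 1| ≤ ‖p ^ 2 + 1‖ := by
  refine abs_le_of_sq_le_sq ?_ (norm_nonneg _)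
  rw [← Complex.normSq_eq_norm_sq, Complex.normSq_apply]
  simp only [sq, Complex.add_re, Complex.mul_re, Complex.one_re, Complex.add_im, Complex.mul_im,
    Complex.one_im]
  nlinarith [sq_nonneg p.re, sq_nonneg (p.re * p.im), sq_nonneg (p.re ^ 2)]

theorem sqrt_abs_im_sq_sub_one_le_norm_cosh (w : ℂ) :
    √|(Complex.sinh w).im ^ 2 - 1| ≤ ‖Complex.cosh w‖ := by
  rw [Real.sqrt_le_left (norm_nonneg _), ← norm_pow, Complex.cosh_sq]
  exact abs_sq_im_sub_one_le _

theorem norm_laplaceBesselJ_le_of_abs_im_lt_one (n : ℕ) {p : ℂ} (hp : 0 < p.re) (h : |p.im| < 1) :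
    ‖laplaceBesselJ n p‖ ≤ (√(1 - p.im ^ 2))⁻¹ := by
  obtain ⟨w, hw, rfl⟩ := exists_sinh_eq_of_re_pos hp
  have him := (sq_lt_one_iff_abs_lt_one _).2 h
  have hcosh := sqrt_abs_im_sq_sub_one_le_norm_cosh w
  rw [abs_of_neg (sub_neg.2 him), neg_sub] at hcosh
  rw [laplaceBesselJ_sinh n hw hp, norm_div, Complex.norm_exp, ← one_div]
  have := Real.sqrt_pos.2 (sub_pos.2 him)
  gcongr
  rw [Real.exp_le_one_iff]
  simpa using mul_nonneg n.cast_nonneg hw.le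

theorem norm_laplaceBesselJ_le_of_one_lt_abs_im (n : ℕ) {p : ℂ} (hp : 0 < p.re) (h : 1 < |p.im|) :
    ‖laplaceBesselJ n p‖ ≤ Real.exp (-(n * Real.arcosh |p.im|)) / √(p.im ^ 2 - 1) := by
  obtain ⟨w, hw, rfl⟩ := exists_sinh_eq_of_re_pos hp
  have him := (one_lt_sq_iff_one_lt_abs _).2 h
  have hcosh := sqrt_abs_im_sq_sub_one_le_norm_cosh w
  rw [abs_of_pos (sub_pos.2 him)] at hcosh
  have harcosh : Real.arcosh |(Complex.sinh w).im| ≤ w.re := by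
    rw [← Real.arcosh_cosh hw.le, Real.arcosh_le_arcosh (by positivity) (Real.cosh_pos _)]
    exact (Complex.abs_im_le_norm _).trans (norm_sinh_le w)
  rw [laplaceBesselJ_sinh n hw hp, norm_div, Complex.norm_exp]
  have := Real.sqrt_pos.2 (sub_pos.2 him)
  have hre : (-(n * w)).re = -(n * w.re) := by simp
  rw [hre]
  gcongr

theorem integrable_exp_neg_add_mul_cosh_mul {b c : ℝ} (hb : 0 < b) (hc : 0 < c) :
    Integrable (fun x : ℝ × ℝ => Real.exp (-(b + c * Real.cosh x.2) * x.1))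
      ((volume.restrict (Ioi 0)).prod volume) := by
  have hpos : ∀ u, 0 < b + c * Real.cosh u := fun u => by
    have := Real.cosh_pos u
    positivity
  rw [integrable_prod_iff' (Continuous.aestronglyMeasurable (by fun_prop))]
  refine ⟨ae_of_all _ fun u => integrableOn_exp_mul_Ioi (neg_lt_zero.2 (hpos u)) 0, ?_⟩
  have hinner : ∀ u, ∫ y in Ioi 0, ‖Real.exp (-(b + c * Real.cosh u) * y)‖ =
      (b + c * Real.cosh u)⁻¹ := fun u => by
    simp only [Real.norm_eq_abs, Real.abs_exp]
    rw [integral_exp_mul_Ioi (neg_lt_zero.2 (hpos u)), mul_zero, Real.exp_zero, neg_div_neg_eq,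
      one_div]
  simp only [hinner]
  refine (integrable_inv_cosh.const_mul c⁻¹).mono' ?_ (ae_of_all _ fun u => ?_)
  · exact (Continuous.inv₀ (by fun_prop) fun u => (hpos u).ne').aestronglyMeasurable
  · have := Real.cosh_pos u
    rw [norm_inv, Real.norm_of_nonneg (hpos u).le, ← mul_inv]
    gcongr
    exact le_add_of_nonneg_left hb.le

theorem integral_exp_mul_besselJ_mul_besselK (n : ℕ) {ν ω : ℂ} (hν : ν.re = 0) (hω : 0 < ω.re)
    {b : ℝ} (hb : 0 < b) :
    ∫ y : ℝ in Ioi 0, Complex.exp (-(b * y)) * besselJ n y * besselK ν (ω * y) =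
      1 / 2 * ∫ u : ℝ, Complex.exp (ν * u) * laplaceBesselJ n (b + ω * Real.cosh u) := by
  set F : ℝ → ℝ → ℂ := fun y u =>
    Complex.exp (ν * u - (b + ω * Real.cosh u) * y) * besselJ n y with hFdef
  have hF : Integrable (Function.uncurry F) ((volume.restrict (Ioi 0)).prod volume) := by
    have hexp : Integrable (fun x : ℝ × ℝ =>
        Complex.exp (ν * x.2 - (b + ω * Real.cosh x.2) * x.1))
        ((volume.restrict (Ioi 0)).prod volume) := by
      refine (integrable_exp_neg_add_mul_cosh_mul hb hω).mono'
        (Continuous.aestronglyMeasurable (by fun_prop)) (ae_of_all _ fun x => le_of_eq ?_)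
      rw [Complex.norm_exp, Complex.sub_re, Complex.re_mul_ofReal, hν, zero_mul, zero_sub, neg_mul]
      simp
    have hmeas : AEStronglyMeasurable (fun x : ℝ × ℝ => besselJ n x.1)
        ((volume.restrict (Ioi 0)).prod volume) :=
      ((continuousOn_besselJ n).aestronglyMeasurable measurableSet_Ioi).comp_fst
    have hbdd : ∀ᵐ x : ℝ × ℝ ∂(volume.restrict (Ioi 0)).prod volume, ‖besselJ n x.1‖ ≤ 1 :=
      Measure.quasiMeasurePreserving_fst.ae (p := fun y => ‖besselJ n y‖ ≤ 1)
        ((ae_restrict_mem measurableSet_Ioi).mono fun y hy => norm_besselJ_natCast_le_one n hy)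
    exact hexp.mul_bdd hmeas hbdd
  calc ∫ y : ℝ in Ioi 0, Complex.exp (-(b * y)) * besselJ n y * besselK ν (ω * y)
      = 1 / 2 * ∫ y in Ioi 0, ∫ u, F y u := by
        rw [← integral_const_mul]
        congr with y
        rw [besselK, mul_left_comm, ← integral_const_mul]
        congr with u
        simp only [besselKKernel, hFdef]
        rw [mul_right_comm, ← Complex.exp_add]
        ring_nf
    _ = 1 / 2 * ∫ u : ℝ, Complex.exp (ν * u) * laplaceBesselJ n (b + ω * Real.cosh u) := by
        rw [integral_integral_swap hF]
        congr with u
        rw [laplaceBesselJ, ← integral_const_mul]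
        congr with y
        simp only [hFdef]
        rw [← mul_assoc, ← Complex.exp_add, sub_eq_add_neg]

/-! ### A majorant for the Laplace transform -/

theorem convexOn_sinh : ConvexOn ℝ (Ici 0) Real.sinh := by
  refine MonotoneOn.convexOn_of_deriv (convex_Ici 0) Real.continuous_sinh.continuousOn
    Real.differentiable_sinh.differentiableOn ?_
  rw [interior_Ici, Real.deriv_sinh]
  exact Real.cosh_strictMonoOn.monotoneOn.mono Ioi_subset_Ici_self

theorem sinh_le_div_mul_sinh {u L : ℝ} (hL : 0 < L) (hu : 0 ≤ u) (huL : u ≤ L) :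
    Real.sinh u ≤ u / L * Real.sinh L := by
  have hconv := convexOn_sinh.2 self_mem_Ici (mem_Ici.2 hL.le)
    (sub_nonneg.2 ((div_le_one hL).2 huL)) (div_nonneg hu hL.le) (sub_add_cancel 1 (u / L))
  simpa [div_mul_cancel₀ u hL.ne'] using hconv

theorem tanh_pos {L : ℝ} (hL : 0 < L) : 0 < Real.tanh L := by
  rw [Real.tanh_eq_sinh_div_cosh]
  exact div_pos (Real.sinh_pos_iff.2 hL) (Real.cosh_pos L)

theorem tanh_sq_mul_one_sub_le {u L : ℝ} (hL : 0 < L) (hu : 0 ≤ u) (huL : u ≤ L) :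
    Real.tanh L ^ 2 * (1 - (u / L) ^ 2) ≤ 1 - (Real.cosh u / Real.cosh L) ^ 2 := by
  have hsinh : Real.sinh u ^ 2 ≤ (u / L * Real.sinh L) ^ 2 :=
    pow_le_pow_left₀ (Real.sinh_nonneg_iff.2 hu) (sinh_le_div_mul_sinh hL hu huL) 2
  have := Real.cosh_pos L
  have hsub : 1 - (Real.cosh u / Real.cosh L) ^ 2 - Real.tanh L ^ 2 * (1 - (u / L) ^ 2) =
      ((u / L * Real.sinh L) ^ 2 - Real.sinh u ^ 2) / Real.cosh L ^ 2 := by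
    rw [Real.tanh_eq_sinh_div_cosh]
    field_simp
    rw [Real.cosh_sq u, Real.cosh_sq L]
    ring
  rw [← sub_nonneg, hsub]
  exact div_nonneg (sub_nonneg.2 hsinh) (sq_nonneg _)

theorem div_tanh_le {L : ℝ} (hL : 0 < L) : L / Real.tanh L ≤ 1 + L := by
  rw [Real.tanh_eq_sinh_div_cosh, div_div_eq_mul_div, div_le_iff₀ (Real.sinh_pos_iff.2 hL)]
  have hexp : L * Real.exp (-L) ≤ Real.sinh L :=
    (mul_le_of_le_one_right hL.le (Real.exp_le_one_iff.2 (neg_nonpos.2 hL.le))).trans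
      (Real.self_le_sinh_iff.2 hL.le)
  rw [← Real.cosh_sub_sinh] at hexp
  linarith

theorem cosh_div_cosh_lt_one {u L : ℝ} (hu : |u| < |L|) : Real.cosh u / Real.cosh L < 1 :=
  (div_lt_one (Real.cosh_pos L)).2 (Real.cosh_lt_cosh.2 hu)

theorem one_lt_cosh_div_cosh {u L : ℝ} (hu : |L| < |u|) : 1 < Real.cosh u / Real.cosh L :=
  (one_lt_div (Real.cosh_pos L)).2 (Real.cosh_lt_cosh.2 hu)

theorem sub_le_arcosh_cosh_div_cosh {u L : ℝ} (hL : 0 ≤ L) (hu : L ≤ u) :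
    u - L ≤ Real.arcosh (Real.cosh u / Real.cosh L) := by
  have hcoshL := Real.cosh_pos L
  have := Real.cosh_pos u
  rw [← Real.arcosh_cosh (sub_nonneg.2 hu),
    Real.arcosh_le_arcosh (Real.cosh_pos _) (by positivity), le_div_iff₀ hcoshL]
  have hadd := Real.cosh_add (u - L) L
  rw [sub_add_cancel] at hadd
  rw [hadd]
  exact le_add_of_nonneg_right
    (mul_nonneg (Real.sinh_nonneg_iff.2 (sub_nonneg.2 hu)) (Real.sinh_nonneg_iff.2 hL))

theorem tendsto_arcosh_cosh_div_cosh_atTop {L : ℝ} (hL : 0 ≤ L) :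
    Tendsto (fun u => Real.arcosh (Real.cosh u / Real.cosh L)) atTop atTop := by
  refine tendsto_atTop_mono' atTop ?_ (tendsto_atTop_add_const_right atTop (-L) tendsto_id)
  filter_upwards [eventually_ge_atTop L] with u hu
  exact sub_le_arcosh_cosh_div_cosh hL hu

theorem continuousOn_arcosh_cosh_div_cosh {L : ℝ} (hL : 0 ≤ L) :
    ContinuousOn (fun u => Real.arcosh (Real.cosh u / Real.cosh L)) (Ici L) :=
  Real.continuousOn_arcosh.comp (Continuous.continuousOn (by fun_prop)) fun _ hu =>
    (one_le_div (Real.cosh_pos L)).2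
      (Real.cosh_strictMonoOn.monotoneOn hL (hL.trans hu) hu)

theorem hasDerivAt_arcosh_cosh_div_cosh {L u : ℝ} (hu : |L| < |u|) :
    HasDerivAt (fun u => Real.arcosh (Real.cosh u / Real.cosh L))
      ((√((Real.cosh u / Real.cosh L) ^ 2 - 1))⁻¹ * (Real.sinh u / Real.cosh L)) u :=
  HasDerivAt.comp (h₂ := Real.arcosh) u (Real.hasDerivAt_arcosh (one_lt_cosh_div_cosh hu))
    ((Real.hasDerivAt_cosh u).div_const _)

/-- The function of `u > 0` dominating `|L_n(p)|`, where `L_n` is the Laplace transform of `J_n`,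
when `|Im p| = cosh u / cosh L`. It is singular at `u = L`, where `p` may approach the branch
points `±i` of `L_n`; both branches are chosen to be derivatives of elementary functions. -/
noncomputable def laplaceMajorant (n : ℕ) (L u : ℝ) : ℝ :=
  if u ≤ L then (√(1 - (u / L) ^ 2))⁻¹ / Real.tanh L
  else Real.exp (-(n * Real.arcosh (Real.cosh u / Real.cosh L))) *
    ((√((Real.cosh u / Real.cosh L) ^ 2 - 1))⁻¹ * (Real.sinh u / Real.cosh L)) / Real.tanh L

theorem norm_laplaceBesselJ_le_laplaceMajorant (n : ℕ) {L u : ℝ} (hL : 0 < L) (hu : 0 ≤ u)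
    (huL : u ≠ L) {p : ℂ} (hp : 0 < p.re) (him : |p.im| = Real.cosh u / Real.cosh L) :
    ‖laplaceBesselJ n p‖ ≤ laplaceMajorant n L u := by
  have htanh := tanh_pos hL
  rcases huL.lt_or_gt with hlt | hgt
  · have hlt_one : Real.cosh u / Real.cosh L < 1 :=
      cosh_div_cosh_lt_one (by rwa [abs_of_nonneg hu, abs_of_pos hL])
    refine (norm_laplaceBesselJ_le_of_abs_im_lt_one n hp (him ▸ hlt_one)).trans ?_
    rw [laplaceMajorant, if_pos hlt.le, ← sq_abs, him, ← one_div, ← one_div, div_div,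
      ← Real.sqrt_sq htanh.le, ← Real.sqrt_mul' _ (sq_nonneg _), mul_comm]
    have hdiv : (u / L) ^ 2 < 1 := by
      rw [sq_lt_one_iff₀ (by positivity), div_lt_one hL]
      exact hlt
    have := mul_pos (sq_pos_of_pos htanh) (sub_pos.2 hdiv)
    gcongr
    exact tanh_sq_mul_one_sub_le hL hu hlt.le
  · have hone_lt : 1 < Real.cosh u / Real.cosh L :=
      one_lt_cosh_div_cosh (by rwa [abs_of_nonneg hu, abs_of_pos hL])
    refine (norm_laplaceBesselJ_le_of_one_lt_abs_im n hp (him ▸ hone_lt)).trans ?_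
    rw [laplaceMajorant, if_neg hgt.not_ge, ← sq_abs p.im, him, ← mul_assoc, mul_div_assoc,
      ← div_eq_mul_inv]
    refine le_mul_of_one_le_right (by positivity) ((one_le_div htanh).2 ?_)
    rw [Real.tanh_eq_sinh_div_cosh]
    have := Real.cosh_pos L
    gcongr
    exact Real.sinh_le_sinh.2 hgt.le

theorem laplaceMajorant_Ioc (n : ℕ) {L : ℝ} (hL : 0 < L) :
    IntegrableOn (laplaceMajorant n L) (Ioc 0 L) ∧
      ∫ u in Ioc 0 L, laplaceMajorant n L u = π * L / 2 / Real.tanh L := by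
  have hcongr : EqOn (fun u => (√(1 - (u / L) ^ 2))⁻¹ / Real.tanh L) (laplaceMajorant n L)
      (Ioc 0 L) := fun u hu => by rw [laplaceMajorant, if_pos hu.2]
  have hcont : ContinuousOn (fun u => L * Real.arcsin (u / L)) (Icc 0 L) :=
    Continuous.continuousOn (by fun_prop)
  have hderiv : ∀ u ∈ Ioo 0 L,
      HasDerivAt (fun u => L * Real.arcsin (u / L)) (√(1 - (u / L) ^ 2))⁻¹ u := fun u hu => by
    have hlt : u / L < 1 := (div_lt_one hL).2 hu.2
    have hgt : -1 < u / L := neg_one_lt_zero.trans (div_pos hu.1 hL)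
    refine (((Real.hasDerivAt_arcsin hgt.ne' hlt.ne).comp u
      ((hasDerivAt_id u).div_const L)).const_mul L).congr_deriv ?_
    field_simp
  have hint := intervalIntegral.integrableOn_deriv_of_nonneg hcont hderiv fun u _ => by positivity
  refine ⟨IntegrableOn.congr_fun (hint.div_const _) hcongr measurableSet_Ioc, ?_⟩
  rw [← setIntegral_congr_fun measurableSet_Ioc hcongr, integral_div,
    ← intervalIntegral.integral_of_le hL.le,
    intervalIntegral.integral_eq_sub_of_hasDerivAt_of_le hL.le hcont hderiv
      ((intervalIntegrable_iff_integrableOn_Ioc_of_le hL.le).2 hint),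
    div_self hL.ne', Real.arcsin_one, zero_div, Real.arcsin_zero]
  ring

theorem laplaceMajorant_Ioi {n : ℕ} (hn : n ≠ 0) {L : ℝ} (hL : 0 < L) :
    IntegrableOn (laplaceMajorant n L) (Ioi L) ∧
      ∫ u in Ioi L, laplaceMajorant n L u = (n : ℝ)⁻¹ / Real.tanh L := by
  set θ : ℝ → ℝ := fun u => Real.arcosh (Real.cosh u / Real.cosh L) with hθ
  set G : ℝ → ℝ := fun u => -(Real.exp (-(n * θ u)) / n / Real.tanh L) with hG
  have hn0 : (n : ℝ) ≠ 0 := Nat.cast_ne_zero.2 hn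
  have htanh := tanh_pos hL
  have hcont : ContinuousWithinAt G (Ici L) L := by
    have hθcont := continuousOn_arcosh_cosh_div_cosh hL.le L self_mem_Ici
    fun_prop
  have hderiv : ∀ u ∈ Ioi L, HasDerivAt G (laplaceMajorant n L u) u := fun u hu => by
    have hθderiv := hasDerivAt_arcosh_cosh_div_cosh
      (L := L) (u := u) (by rwa [abs_of_pos hL, abs_of_pos (hL.trans hu)])
    refine ((((hθderiv.const_mul (n : ℝ)).fun_neg.exp).div_const n).div_const _).neg.congr_deriv ?_
    rw [laplaceMajorant, if_neg (not_le.2 hu)]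
    field_simp
  have hnonneg : ∀ u ∈ Ioi L, 0 ≤ laplaceMajorant n L u := fun u hu => by
    have := Real.sinh_pos_iff.2 (hL.trans hu)
    have := Real.cosh_pos L
    rw [laplaceMajorant, if_neg (not_le.2 hu)]
    positivity
  have hlim : Tendsto G atTop (𝓝 0) := by
    have hexp := Real.tendsto_exp_neg_atTop_nhds_zero.comp
      ((tendsto_arcosh_cosh_div_cosh_atTop hL.le).const_mul_atTop (by positivity : (0 : ℝ) < n))
    simpa using ((hexp.div_const (n : ℝ)).div_const (Real.tanh L)).neg
  refine ⟨integrableOn_Ioi_deriv_of_nonneg hcont hderiv hnonneg hlim, ?_⟩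
  rw [integral_Ioi_of_hasDerivAt_of_nonneg hcont hderiv hnonneg hlim]
  simp [hG, hθ, div_self (Real.cosh_pos L).ne']

theorem laplaceMajorant_Ioi_zero {n : ℕ} (hn : n ≠ 0) {L : ℝ} (hL : 0 < L) :
    IntegrableOn (laplaceMajorant n L) (Ioi 0) ∧
      ∫ u in Ioi 0, laplaceMajorant n L u = (π * L / 2 + (n : ℝ)⁻¹) / Real.tanh L := by
  obtain ⟨hleft, hleft_eq⟩ := laplaceMajorant_Ioc n hL
  obtain ⟨hright, hright_eq⟩ := laplaceMajorant_Ioi hn hL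
  rw [← Ioc_union_Ioi_eq_Ioi hL.le]
  refine ⟨hleft.union hright, ?_⟩
  rw [setIntegral_union (Ioc_disjoint_Ioi le_rfl) measurableSet_Ioi hleft hright, hleft_eq,
    hright_eq, add_div]

theorem integrable_comp_abs {E : Type*} [NormedAddCommGroup E] {f : ℝ → E}
    (hf : IntegrableOn f (Ioi 0)) : Integrable fun x => f |x| := by
  have hpos : IntegrableOn (fun x => f |x|) (Ioi 0) :=
    hf.congr_fun (fun x hx => by rw [abs_of_pos hx]) measurableSet_Ioi
  have hneg : IntegrableOn (fun x => f |x|) (Iic 0) := by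
    rw [← neg_zero] at hpos
    rw [integrableOn_Iic_iff_integrableOn_Iio]
    simpa only [abs_neg] using hpos.comp_neg_Iio
  rw [← integrableOn_univ, ← Iic_union_Ioi (a := (0 : ℝ))]
  exact hneg.union hpos

theorem norm_integral_exp_mul_laplaceBesselJ_le {n : ℕ} (hn : n ≠ 0) {ν ω : ℂ} (hν : ν.re = 0)
    (hω : 0 < ω.re) {L : ℝ} (hL : 0 < L) (hωim : |ω.im| = (Real.cosh L)⁻¹) {b : ℝ} (hb : 0 < b) :
    ‖∫ u : ℝ, Complex.exp (ν * u) * laplaceBesselJ n (b + ω * Real.cosh u)‖ ≤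
      2 * ((π * L / 2 + (n : ℝ)⁻¹) / Real.tanh L) := by
  obtain ⟨hint, heq⟩ := laplaceMajorant_Ioi_zero hn hL
  rw [← heq, ← integral_comp_abs]
  refine norm_integral_le_of_norm_le (integrable_comp_abs hint) ?_
  have hne : ∀ᵐ u : ℝ, u ∉ ({L, -L} : Set ℝ) :=
    measure_eq_zero_iff_ae_notMem.1 ((Set.toFinite _).measure_zero _)
  filter_upwards [hne] with u hu
  have hcosh := Real.cosh_pos u
  have hexp : ‖Complex.exp (ν * u)‖ = 1 := by simp [Complex.norm_exp, hν]
  rw [norm_mul, hexp, one_mul]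
  refine norm_laplaceBesselJ_le_laplaceMajorant n hL (abs_nonneg u)
    (fun h => hu (eq_or_eq_neg_of_abs_eq h)) ?_ ?_
  · rw [Complex.add_re, Complex.re_mul_ofReal, Complex.ofReal_re]
    positivity
  · rw [Complex.add_im, Complex.im_mul_ofReal, Complex.ofReal_im, zero_add, abs_mul, hωim,
      abs_of_pos hcosh, Real.cosh_abs, inv_mul_eq_div]

theorem norm_integral_exp_mul_besselJ_mul_besselK_le {n : ℕ} (hn : n ≠ 0) {ν ω : ℂ}
    (hν : ν.re = 0) (hω : 0 < ω.re) {L : ℝ} (hL : 0 < L) (hωim : |ω.im| = (Real.cosh L)⁻¹)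
    {b : ℝ} (hb : 0 < b) :
    ‖∫ y : ℝ in Ioi 0, Complex.exp (-(b * y)) * besselJ n y * besselK ν (ω * y)‖ ≤
      (π * L / 2 + (n : ℝ)⁻¹) / Real.tanh L := by
  rw [integral_exp_mul_besselJ_mul_besselK n hν hω hb, norm_mul]
  have hbound := norm_integral_exp_mul_laplaceBesselJ_le hn hν hω hL hωim hb
  norm_num at hbound ⊢
  linarith

/-! ### Passage to the boundary -/

theorem aestronglyMeasurable_exp_mul_besselJ_mul_besselK (μ ν : ℂ) {ω : ℂ} (hω : 0 < ω.re)
    (b : ℝ) :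
    AEStronglyMeasurable (fun y : ℝ => Complex.exp (-(b * y)) * besselJ μ y * besselK ν (ω * y))
      (volume.restrict (Ioi 0)) := by
  have hK : ContinuousOn (fun y : ℝ => besselK ν (ω * y)) (Ioi 0) := fun y hy => by
    have hre : 0 < (ω * (y : ℂ)).re := by
      rw [Complex.re_mul_ofReal]
      exact mul_pos hω hy
    exact (ContinuousAt.comp (f := fun y : ℝ => ω * (y : ℂ)) (hasDerivAt_besselK hre ν).continuousAt
      (by fun_prop)).continuousWithinAt
  have hJ := continuousOn_besselJ μ
  exact ContinuousOn.aestronglyMeasurable (by fun_prop) measurableSet_Ioi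

theorem norm_exp_mul_besselJ_mul_besselK_le {n : ℕ} (hn : n ≠ 0) {ν ω : ℂ} (hν : ν.re = 0)
    (hω : 0 < ω.re) (b : ℝ) {c y : ℝ} (hc : 0 < c) (hcω : c ≤ ‖ω‖) (hy : 0 < y) :
    ‖Complex.exp (-(b * y)) * besselJ n y * besselK ν (ω * y)‖ ≤
      (∫ u, (Real.cosh u)⁻¹) * (1 + (‖ν‖ + 1) / c) * Real.exp (-b * y) := by
  have hre : 0 < (ω * (y : ℂ)).re := by
    rw [Complex.re_mul_ofReal]
    exact mul_pos hω hy
  have : 0 ≤ ∫ u, (Real.cosh u)⁻¹ :=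
    integral_nonneg fun u => inv_nonneg.2 (Real.cosh_pos u).le
  have hexp : ‖Complex.exp (-(b * y))‖ = Real.exp (-b * y) := by simp [Complex.norm_exp]
  have hJ : ‖besselJ n y‖ * (1 + (‖ν‖ + 1) / ‖ω * y‖) ≤ 1 + (‖ν‖ + 1) / c := by
    rw [norm_mul, Complex.norm_of_nonneg hy.le, mul_add, mul_one]
    refine add_le_add (norm_besselJ_natCast_le_one n hy) ?_
    calc ‖besselJ n y‖ * ((‖ν‖ + 1) / (‖ω‖ * y)) ≤ y * ((‖ν‖ + 1) / (c * y)) := by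
          gcongr
          exact norm_besselJ_natCast_le hn hy
      _ = (‖ν‖ + 1) / c := by field_simp
  calc ‖Complex.exp (-(b * y)) * besselJ n y * besselK ν (ω * y)‖
      ≤ Real.exp (-b * y) * ‖besselJ n y‖ *
          ((∫ u, (Real.cosh u)⁻¹) * (1 + (‖ν‖ + 1) / ‖ω * y‖)) := by
        rw [norm_mul, norm_mul, hexp]
        gcongr
        exact norm_besselK_le hν hre
    _ = (∫ u, (Real.cosh u)⁻¹) * (‖besselJ n y‖ * (1 + (‖ν‖ + 1) / ‖ω * y‖)) *
          Real.exp (-b * y) := by ring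
    _ ≤ _ := by gcongr

theorem integrableOn_exp_mul_besselJ_mul_besselK {n : ℕ} (hn : n ≠ 0) {ν ω : ℂ} (hν : ν.re = 0)
    (hω : 0 < ω.re) {b : ℝ} (hb : 0 < b) :
    IntegrableOn (fun y : ℝ => Complex.exp (-(b * y)) * besselJ n y * besselK ν (ω * y))
      (Ioi 0) := by
  refine Integrable.mono' (Integrable.const_mul (integrableOn_exp_mul_Ioi (neg_lt_zero.2 hb) 0) _)
    (aestronglyMeasurable_exp_mul_besselJ_mul_besselK n ν hω b)
    (ae_restrict_of_forall_mem measurableSet_Ioi fun y hy =>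
      norm_exp_mul_besselJ_mul_besselK_le hn hν hω b (hω.trans_le (Complex.re_le_norm ω)) le_rfl hy)

theorem tendsto_integral_exp_mul_besselJ_mul_besselK_add {n : ℕ} (hn : n ≠ 0) {ν : ℂ}
    (hν : ν.re = 0) (hsin : Complex.sin (π * ν) ≠ 0) {b c : ℝ} (hb : 0 < b) (hc : 0 < c) :
    Tendsto (fun ε : ℝ =>
        (∫ y : ℝ in Ioi 0, Complex.exp (-(b * y)) * besselJ n y *
          besselK ν ((ε + c * Complex.I) * y)) +
        ∫ y : ℝ in Ioi 0, Complex.exp (-(b * y)) * besselJ n y *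
          besselK ν ((ε - c * Complex.I) * y))
      (𝓝[>] 0)
      (𝓝 (π * ∫ y : ℝ in Ioi 0, Complex.exp (-(b * y)) * besselJ n y *
        kplus (y * c) (1 / 2 + ν / 2))) := by
  set P : ℂ → ℝ → ℂ := fun ω y => Complex.exp (-(b * y)) * besselJ n y * besselK ν (ω * y) with hP
  set D : ℝ → ℝ := fun y => (∫ u, (Real.cosh u)⁻¹) * (1 + (‖ν‖ + 1) / c) * Real.exp (-b * y)
  have hD : IntegrableOn D (Ioi 0) := (integrableOn_exp_mul_Ioi (neg_lt_zero.2 hb) 0).const_mul _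
  have hre_add (ε : ℝ) : ((ε : ℂ) + c * Complex.I).re = ε := by simp
  have hre_sub (ε : ℝ) : ((ε : ℂ) - c * Complex.I).re = ε := by simp
  have hnorm_add (ε : ℝ) : c ≤ ‖(ε : ℂ) + c * Complex.I‖ := by
    simpa [abs_of_pos hc] using Complex.abs_im_le_norm ((ε : ℂ) + c * Complex.I)
  have hnorm_sub (ε : ℝ) : c ≤ ‖(ε : ℂ) - c * Complex.I‖ := by
    simpa [abs_of_pos hc] using Complex.abs_im_le_norm ((ε : ℂ) - c * Complex.I)
  rw [← integral_const_mul]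
  have hsum : ∀ᶠ ε : ℝ in 𝓝[>] 0,
      ∫ y in Ioi 0, (P (ε + c * Complex.I) y + P (ε - c * Complex.I) y) =
        (∫ y in Ioi 0, P (ε + c * Complex.I) y) + ∫ y in Ioi 0, P (ε - c * Complex.I) y := by
    filter_upwards [self_mem_nhdsWithin] with ε hε
    exact integral_add
      (integrableOn_exp_mul_besselJ_mul_besselK hn hν ((hre_add ε).symm ▸ hε) hb)
      (integrableOn_exp_mul_besselJ_mul_besselK hn hν ((hre_sub ε).symm ▸ hε) hb)
  refine Tendsto.congr' hsum (tendsto_integral_filter_of_dominated_convergence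
    (fun y => D y + D y) ?_ ?_ (hD.add hD) ?_)
  · filter_upwards [self_mem_nhdsWithin] with ε hε
    exact (aestronglyMeasurable_exp_mul_besselJ_mul_besselK n ν ((hre_add ε).symm ▸ hε) b).add
      (aestronglyMeasurable_exp_mul_besselJ_mul_besselK n ν ((hre_sub ε).symm ▸ hε) b)
  · filter_upwards [self_mem_nhdsWithin] with ε hε
    filter_upwards [ae_restrict_mem measurableSet_Ioi] with y hy
    exact norm_add_le_of_le
      (norm_exp_mul_besselJ_mul_besselK_le hn hν ((hre_add ε).symm ▸ hε) b hc (hnorm_add ε) hy)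
      (norm_exp_mul_besselJ_mul_besselK_le hn hν ((hre_sub ε).symm ▸ hε) b hc (hnorm_sub ε) hy)
  · filter_upwards [ae_restrict_mem measurableSet_Ioi] with y hy
    have hlim := (tendsto_besselK_add_besselK hν hsin hy hc).const_mul
      (π * (Complex.exp (-(b * y)) * besselJ n y))
    rw [mul_assoc (π : ℂ)] at hlim
    refine hlim.congr fun ε => ?_
    have := Complex.ofReal_ne_zero.2 Real.pi_ne_zero
    simp only [hP]
    field_simp

theorem norm_integral_exp_mul_besselJ_mul_kplus_le {n : ℕ} (hn : n ≠ 0) {ν : ℂ} (hν : ν.re = 0)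
    (hsin : Complex.sin (π * ν) ≠ 0) {L : ℝ} (hL : 0 < L) {b : ℝ} (hb : 0 < b) :
    ‖∫ y : ℝ in Ioi 0, Complex.exp (-(b * y)) * besselJ n y *
        kplus (y * (Real.cosh L)⁻¹) (1 / 2 + ν / 2)‖ ≤
      (L + 2 / (π * n)) / Real.tanh L := by
  set c := (Real.cosh L)⁻¹ with hcL
  have hc : 0 < c := inv_pos.2 (Real.cosh_pos L)
  have hbound := le_of_tendsto
    (tendsto_integral_exp_mul_besselJ_mul_besselK_add hn hν hsin hb hc).norm <| by
      filter_upwards [self_mem_nhdsWithin] with ε hε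
      exact norm_add_le_of_le
        (norm_integral_exp_mul_besselJ_mul_besselK_le hn hν (by simpa using hε) hL
          (by simpa [abs_of_pos hc] using hcL) hb)
        (norm_integral_exp_mul_besselJ_mul_besselK_le hn hν (by simpa using hε) hL
          (by simpa [abs_of_pos hc] using hcL) hb)
  rw [norm_mul, Complex.norm_of_nonneg Real.pi_pos.le, ← le_div_iff₀' Real.pi_pos] at hbound
  refine hbound.trans_eq ?_
  field_simp
  ring

-- Junk value: the denominator `2 cos (π / 2)` vanishes.
theorem kplus_half (y : ℝ) : kplus y (1 / 2) = 0 := by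
  rw [kplus, mul_one_div (π : ℂ), Complex.cos_pi_div_two, mul_zero, div_zero]

theorem sin_pi_mul_two_mul_I_mul_ne_zero {t : ℝ} (ht : t ≠ 0) :
    Complex.sin (π * (2 * (Complex.I * t))) ≠ 0 := by
  rw [show (π : ℂ) * (2 * (Complex.I * t)) = ((π * (2 * t) : ℝ) : ℂ) * Complex.I by push_cast; ring,
    Complex.sin_mul_I, ← Complex.ofReal_sinh]
  have hsinh : Real.sinh (π * (2 * t)) ≠ 0 := by simp [ht, Real.pi_ne_zero]
  exact mul_ne_zero (Complex.ofReal_ne_zero.2 hsinh) Complex.I_ne_zero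

theorem arcosh_le_log_two_mul {x : ℝ} (hx : 1 ≤ x) : Real.arcosh x ≤ Real.log (2 * x) := by
  rw [Real.le_log_iff_exp_le (by positivity), ← Real.cosh_add_sinh, two_mul,
    Real.cosh_arcosh hx]
  exact add_le_add_right ((Real.sinh_lt_cosh _).le.trans_eq (Real.cosh_arcosh hx)) x

theorem arcosh_inv_sqrt_le {z : ℝ} (hz0 : 0 < z) (hz1 : z ≤ 1) :
    Real.arcosh (√z)⁻¹ ≤ Real.log 2 + |Real.log z| / 2 := by
  have hone_le : 1 ≤ (√z)⁻¹ := one_le_inv_iff₀.2 ⟨by positivity, Real.sqrt_le_one.2 hz1⟩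
  refine (arcosh_le_log_two_mul hone_le).trans_eq ?_
  rw [Real.log_mul two_ne_zero (by positivity), Real.log_inv, Real.log_sqrt hz0.le,
    abs_of_nonpos (Real.log_nonpos hz0.le hz1)]
  ring

theorem tanh_arcosh_inv_sqrt {z : ℝ} (hz0 : 0 < z) (hz1 : z ≤ 1) :
    Real.tanh (Real.arcosh (√z)⁻¹) = √(1 - z) := by
  rw [Real.tanh_arcosh (one_le_inv_iff₀.2 ⟨by positivity, Real.sqrt_le_one.2 hz1⟩), inv_pow,
    Real.sq_sqrt hz0.le, div_inv_eq_mul, ← Real.sqrt_mul' _ hz0.le]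
  congr 1
  field_simp

theorem norm_integral_exp_mul_besselJ_mul_kplus_half_add_I_mul_le {n : ℕ} (hn : n ≠ 0) (t : ℝ)
    {z : ℝ} (hz0 : 0 < z) (hz1 : z < 1) {b : ℝ} (hb : 0 < b) :
    ‖∫ y : ℝ in Ioi 0, Complex.exp (-(b * y)) * besselJ n y *
        kplus (y * √z) (1 / 2 + Complex.I * t)‖ ≤
      2 * (1 + |Real.log z| + 1 / (n * √(1 - z))) := by
  rcases eq_or_ne t 0 with rfl | ht
  · simp only [Complex.ofReal_zero, mul_zero, add_zero, kplus_half, integral_zero, norm_zero]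
    positivity
  have hone_lt : 1 < (√z)⁻¹ :=
    one_lt_inv_iff₀.2 ⟨by positivity, (Real.sqrt_lt' one_pos).2 (by rwa [one_pow])⟩
  set L := Real.arcosh (√z)⁻¹
  have hL : 0 < L := Real.arcosh_pos hone_lt
  have hn0 : (0 : ℝ) < n := Nat.cast_pos.2 (Nat.pos_of_ne_zero hn)
  have hbound := norm_integral_exp_mul_besselJ_mul_kplus_le hn (ν := 2 * (Complex.I * t)) (by simp)
    (sin_pi_mul_two_mul_I_mul_ne_zero ht) hL hb
  rw [Real.cosh_arcosh hone_lt.le, inv_inv, mul_div_cancel_left₀ _ two_ne_zero] at hbound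
  have hmain : L / √(1 - z) ≤ 2 + |Real.log z| := by
    have := arcosh_inv_sqrt_le hz0 hz1.le
    have := tanh_arcosh_inv_sqrt hz0 hz1.le ▸ div_tanh_le hL
    have := Real.log_two_lt_d9
    linarith [abs_nonneg (Real.log z)]
  have hfrac : 2 / (π * n) / √(1 - z) ≤ 2 * (1 / (n * √(1 - z))) := by
    rw [div_div, mul_one_div]
    have := Real.sqrt_pos.2 (sub_pos.2 hz1)
    gcongr
    nlinarith [Real.pi_gt_three, mul_pos hn0 this]
  refine hbound.trans ?_
  rw [tanh_arcosh_inv_sqrt hz0 hz1.le, add_div]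
  linarith [abs_nonneg (Real.log z)]

theorem abel_limit_bound_general {n : ℕ} (hn : n ≠ 0) (t : ℝ) {z : ℝ} (hz0 : 0 < z) (hz1 : z < 1)
    {I : ℂ} (hI : Tendsto (fun b : ℝ => ∫ y in Ioi (0 : ℝ), Complex.exp (-(b * y)) * besselJ n y *
      kplus (y * √z) (1 / 2 + Complex.I * t)) (𝓝[>] 0) (𝓝 I)) :
    ‖I‖ ≤ 2 * (1 + |Real.log z| + 1 / (n * √(1 - z))) :=
  le_of_tendsto hI.norm <| eventually_mem_nhdsWithin.mono fun _ hb =>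
    norm_integral_exp_mul_besselJ_mul_kplus_half_add_I_mul_le hn t hz0 hz1 hb

/-- There is an absolute constant `C > 0` such that for every integer `k ≥ 1`, real `t` and
`0 < z < 1`, the Abel limit
`I(z) = lim_{b→0⁺} ∫₀^∞ e^{-by} J_{2k-1}(y) k⁺(y√z, 1/2+it) dy` satisfies
`|I(z)| ≤ C (1 + |log z| + 1/((2k-1)√(1-z)))`. -/
theorem abel_limit_bound :
    ∃ C : ℝ, 0 < C ∧ ∀ (k : ℕ), 1 ≤ k → ∀ (t z : ℝ), 0 < z → z < 1 →
      ∀ I : ℂ,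
        Tendsto (fun b : ℝ => ∫ y in Set.Ioi (0 : ℝ),
            Complex.exp (-(b * y)) * besselJ (2 * (k : ℂ) - 1) y *
              kplus (y * Real.sqrt z) (1 / 2 + Complex.I * t))
          (nhdsWithin 0 (Set.Ioi 0)) (nhds I) →
        ‖I‖ ≤ C * (1 + |Real.log z| + 1 / ((2 * (k : ℝ) - 1) * Real.sqrt (1 - z))) := by
  refine ⟨2, two_pos, fun k hk t z hz0 hz1 I hI => ?_⟩
  have hcast : 1 ≤ 2 * k := by lia
  simpa [Nat.cast_sub hcast] using abel_limit_bound_general (n := 2 * k - 1) (by lia) t hz0 hz1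
    (by simpa [Nat.cast_sub hcast] using hI)
end

section
/- Let \(k\geq 1\) be an integer and \(c>1\). Then \(\lim_{b\to 0^{+}}\int_{0}^{\infty}e^{-by}\,J_{2k-1}(y)\,\cos(cy)\,dy = \frac{(-1)^k}{\sqrt{c^2-1}\,\bigl(c+\sqrt{c^2-1}\bigr)^{2k-1}}\) (for each \(b>0\) the integral converges absolutely). -/
open MeasureTheory Filter

/-- The Bessel function of the first kind of nonnegative integer order `m`, for real `y`:
`J_m(y) = ∑_{n≥0} (-1)^n / (n! (n+m)!) (y/2)^{m+2n}`. -/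
noncomputable def besselJr (m : ℕ) (y : ℝ) : ℝ :=
  ∑' n : ℕ, (-1 : ℝ) ^ n / ((n.factorial : ℝ) * ((n + m).factorial : ℝ)) *
    (y / 2) ^ (m + 2 * n)

/-!
Schläfli's integral writes `J_m(y)` as the mean of `z⁻ᵐ exp (y / 2 * (z - z⁻¹))` over the unit
circle. There `z - z⁻¹` is imaginary, so for `Re s > 0` the Laplace transform may be taken under
the mean, and Cauchy's formula at the one root `w - s` of `z² + 2 s z - 1` in the disc gives
`∫₀^∞ exp (-s y) J_m(y) dy = (w - s) ^ m / w`, where `w² = s² + 1`. The right-hand side continues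
along a branch of the square root up to `s = -i c`, where `w = -i √(c² - 1)`; the limit is the real
part of the boundary value.
-/

open Complex (I exp)
open Real (circleAverage)
open Metric (ball closedBall sphere)
open scoped Topology Nat

section CircleAverage

variable {E : Type*} [NormedAddCommGroup E]

lemma hasSum_circleAverage_of_norm_le [NormedSpace ℝ E] {ι : Type*} [Countable ι]
    {f : ι → ℂ → E} {g : ℂ → E} {u : ι → ℝ} {c : ℂ} {R : ℝ}
    (hf : ∀ i, CircleIntegrable (f i) c R) (hu : Summable u)
    (hfu : ∀ i, ∀ z ∈ sphere c |R|, ‖f i z‖ ≤ u i)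
    (hfg : ∀ z ∈ sphere c |R|, HasSum (fun i => f i z) (g z)) :
    HasSum (fun i => circleAverage (f i) c R) (circleAverage g c R) := by
  have mem_sphere (θ : ℝ) : circleMap c R θ ∈ sphere c |R| := circleMap_mem_sphere' c R θ
  refine (intervalIntegral.hasSum_integral_of_dominated_convergence (fun i _ => u i)
    (fun i => ?_) (fun i => ?_) ?_ ?_ ?_).const_smul (2 * Real.pi)⁻¹
  · exact (intervalIntegrable_iff.mp (hf i)).aestronglyMeasurable
  · exact ae_of_all _ fun θ _ => hfu i _ (mem_sphere θ)
  · exact ae_of_all _ fun _ _ => hu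
  · exact intervalIntegrable_const
  · exact ae_of_all _ fun θ _ => hfg _ (mem_sphere θ)

lemma integrable_circleAverage [NormedSpace ℝ E] {α : Type*} [MeasurableSpace α]
    {μ : Measure α} [SFinite μ] {F : α → ℂ → E} {c : ℂ} {R : ℝ}
    (hF : Integrable (fun p : α × ℝ => F p.1 (circleMap c R p.2))
      (μ.prod (volume.restrict (Set.Ioc 0 (2 * Real.pi))))) :
    Integrable (fun x => circleAverage (F x) c R) μ := by
  simp only [Real.circleAverage_def, intervalIntegral.integral_of_le Real.two_pi_pos.le]
  exact hF.integral_prod_left.smul _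

lemma integral_circleAverage_swap [NormedSpace ℝ E] {α : Type*} [MeasurableSpace α]
    {μ : Measure α} [SFinite μ] {F : α → ℂ → E} {c : ℂ} {R : ℝ}
    (hF : Integrable (fun p : α × ℝ => F p.1 (circleMap c R p.2))
      (μ.prod (volume.restrict (Set.Ioc 0 (2 * Real.pi))))) :
    ∫ x, circleAverage (F x) c R ∂μ = circleAverage (fun z => ∫ x, F x z ∂μ) c R := by
  simp only [Real.circleAverage_def, intervalIntegral.integral_of_le Real.two_pi_pos.le,
    integral_smul]
  rw [integral_integral_swap hF]

lemma circleAverage_inv_sub_pow_smul [NormedSpace ℂ E] [CompleteSpace E] {f : ℂ → E} {c : ℂ}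
    {R : ℝ} (hR : 0 < R) (hf : DiffContOnCl ℂ f (ball c R)) (n : ℕ) :
    circleAverage (fun z => (z - c)⁻¹ ^ n • f z) c R = (n ! : ℂ)⁻¹ • iteratedDeriv n f c := by
  have cauchy := hf.circleIntegral_one_div_sub_center_pow_smul hR n
  simp only [one_div, pow_succ', mul_inv, mul_smul, ← inv_pow] at cauchy
  rw [Real.circleAverage_eq_circleIntegral hR.ne', cauchy, smul_smul]
  congr 1
  field_simp [Complex.two_pi_I_ne_zero]

end CircleAverage

lemma circleAverage_inv_pow_mul_exp (x : ℂ) (n : ℕ) :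
    circleAverage (fun z => z⁻¹ ^ n * exp (x * z)) 0 1 = x ^ n / n ! := by
  have hexp : Differentiable ℂ fun z => exp (x * z) := by fun_prop
  have h := circleAverage_inv_sub_pow_smul one_pos (hexp.diffContOnCl (s := ball 0 1)) n
  simpa [iteratedDeriv_cexp_const_mul, div_eq_inv_mul] using h

/-- The integrand of Schläfli's integral for the Bessel function `J_m`: the factor `z⁻ᵐ` extracts
`J_m(y)` from the generating function `exp (y / 2 * (z - z⁻¹)) = ∑ₙ J_n(y) zⁿ`, `n ∈ ℤ`. No factor
`1 / z` appears because the kernel is integrated by `circleAverage`. -/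
noncomputable def schlafliKernel (m : ℕ) (y : ℝ) (z : ℂ) : ℂ :=
  z⁻¹ ^ m * exp (y / 2 * (z - z⁻¹))

lemma re_sub_inv_eq_zero_of_norm_eq_one {z : ℂ} (hz : ‖z‖ = 1) : (z - z⁻¹).re = 0 := by
  simp [Complex.inv_eq_conj hz]

lemma norm_schlafliKernel_of_norm_eq_one (m : ℕ) (y : ℝ) {z : ℂ} (hz : ‖z‖ = 1) :
    ‖schlafliKernel m y z‖ = 1 := by
  have hre : ((y / 2 : ℂ) * (z - z⁻¹)).re = 0 := by
    rw [show (y / 2 : ℂ) = (y / 2 : ℝ) by push_cast; rfl, Complex.re_ofReal_mul,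
      re_sub_inv_eq_zero_of_norm_eq_one hz, mul_zero]
  simp [schlafliKernel, Complex.norm_exp, hz, hre]

lemma hasSum_schlafliKernel (m : ℕ) (y : ℝ) (z : ℂ) :
    HasSum (fun n : ℕ => (-(y / 2 : ℂ)) ^ n / n ! * (z⁻¹ ^ (n + m) * exp (y / 2 * z)))
      (schlafliKernel m y z) := by
  have hexp : HasSum (fun n : ℕ => (-(y / 2 : ℂ) * z⁻¹) ^ n / n !) (exp (-(y / 2 : ℂ) * z⁻¹)) := by
    rw [Complex.exp_eq_exp_ℂ]
    exact NormedSpace.expSeries_div_hasSum_exp _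
  have hkernel :
      exp (-(y / 2 : ℂ) * z⁻¹) * (z⁻¹ ^ m * exp (y / 2 * z)) = schlafliKernel m y z := by
    rw [schlafliKernel, mul_left_comm, ← Complex.exp_add]
    ring_nf
  rw [← hkernel]
  refine (hexp.mul_right (z⁻¹ ^ m * exp (y / 2 * z))).congr_fun fun n => ?_
  ring

theorem circleAverage_schlafliKernel (m : ℕ) (y : ℝ) :
    circleAverage (schlafliKernel m y) 0 1 = besselJr m y := by
  have integrable (n : ℕ) : CircleIntegrable
      (fun z => (-(y / 2 : ℂ)) ^ n / n ! * (z⁻¹ ^ (n + m) * exp (y / 2 * z))) 0 1 := by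
    refine ContinuousOn.circleIntegrable zero_le_one ?_
    have hinv : ContinuousOn (fun z : ℂ => z⁻¹) (sphere 0 1) :=
      continuousOn_inv₀.mono fun z hz => ne_zero_of_mem_unit_sphere ⟨z, hz⟩
    fun_prop
  have bound (n : ℕ) (z : ℂ) (hz : z ∈ sphere (0 : ℂ) |1|) :
      ‖(-(y / 2 : ℂ)) ^ n / n ! * (z⁻¹ ^ (n + m) * exp (y / 2 * z))‖ ≤
        ‖(-(y / 2 : ℂ)) ^ n / (n ! : ℂ)‖ * Real.exp ‖(y / 2 : ℂ)‖ := by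
    have hz : ‖z‖ = 1 := by simpa using hz
    have hexp : ‖exp (y / 2 * z)‖ ≤ Real.exp ‖(y / 2 : ℂ)‖ := by
      simpa [hz] using Complex.norm_exp_le_exp_norm (y / 2 * z)
    rw [norm_mul, norm_mul, norm_pow, norm_inv, hz, inv_one, one_pow, one_mul]
    gcongr
  have series := hasSum_circleAverage_of_norm_le integrable
    ((NormedSpace.norm_expSeries_div_summable _).mul_right _) bound
    fun z _ => hasSum_schlafliKernel m y z
  rw [← series.tsum_eq, besselJr, Complex.ofReal_tsum]
  refine tsum_congr fun n => ?_
  simp only [← smul_eq_mul (a := (-(y / 2 : ℂ)) ^ n / n !), Real.circleAverage_fun_smul,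
    circleAverage_inv_pow_mul_exp]
  push_cast
  rw [smul_eq_mul, neg_pow, show m + 2 * n = n + (n + m) by ring, pow_add]
  ring

section Laplace

variable {s : ℂ}

lemma integrable_exp_mul_schlafliKernel (m : ℕ) (hs : 0 < s.re) :
    Integrable (fun p : ℝ × ℝ => exp (-s * p.1) * schlafliKernel m p.1 (circleMap 0 1 p.2))
      ((volume.restrict (Set.Ioi 0)).prod (volume.restrict (Set.Ioc 0 (2 * Real.pi)))) := by
  have dominating : Integrable (fun p : ℝ × ℝ => exp (-s * p.1))
      ((volume.restrict (Set.Ioi 0)).prod (volume.restrict (Set.Ioc 0 (2 * Real.pi)))) :=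
    Integrable.comp_fst (integrableOn_exp_mul_complex_Ioi (a := -s) (by simpa using hs) 0) _
  refine dominating.mono (Continuous.aestronglyMeasurable ?_) (ae_of_all _ fun p => ?_)
  · simp only [schlafliKernel, circleMap_zero_inv]
    fun_prop
  · rw [norm_mul, norm_schlafliKernel_of_norm_eq_one _ _ (by simp), mul_one]

theorem integrableOn_exp_mul_besselJr (m : ℕ) (hs : 0 < s.re) :
    IntegrableOn (fun y : ℝ => exp (-s * y) * besselJr m y) (Set.Ioi 0) := by
  have h := integrable_circleAverage (F := fun (y : ℝ) z => exp (-s * y) * schlafliKernel m y z)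
    (integrable_exp_mul_schlafliKernel m hs)
  simpa only [IntegrableOn, ← smul_eq_mul (a := exp _), Real.circleAverage_fun_smul,
    circleAverage_schlafliKernel] using h

lemma integral_exp_mul_schlafliKernel (m : ℕ) (hs : 0 < s.re) {z : ℂ} (hz : ‖z‖ = 1) :
    ∫ y in Set.Ioi (0 : ℝ), exp (-s * y) * schlafliKernel m y z =
      z⁻¹ ^ m / (s - (z - z⁻¹) / 2) := by
  have hre : (-(s - (z - z⁻¹) / 2)).re < 0 := by
    simpa [re_sub_inv_eq_zero_of_norm_eq_one hz] using hs
  have combine (y : ℝ) : exp (-s * y) * schlafliKernel m y z =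
      z⁻¹ ^ m * exp (-(s - (z - z⁻¹) / 2) * y) := by
    rw [schlafliKernel, mul_left_comm, ← Complex.exp_add]
    ring_nf
  simp only [combine]
  rw [integral_const_mul, integral_exp_mul_complex_Ioi hre]
  simp [div_eq_mul_inv, neg_inv]

lemma integral_exp_mul_besselJr_eq_circleAverage (m : ℕ) (hs : 0 < s.re) :
    ∫ y in Set.Ioi (0 : ℝ), exp (-s * y) * besselJr m y =
      circleAverage (fun z => z ^ m / (s + (z - z⁻¹) / 2)) 0 1 := calc
  _ = ∫ y in Set.Ioi (0 : ℝ),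
        circleAverage (fun z => exp (-s * y) * schlafliKernel m y z) 0 1 := by
    simp only [← smul_eq_mul (a := exp _), Real.circleAverage_fun_smul,
      circleAverage_schlafliKernel]
  _ = circleAverage (fun z =>
        ∫ y in Set.Ioi (0 : ℝ), exp (-s * y) * schlafliKernel m y z) 0 1 :=
    integral_circleAverage_swap (integrable_exp_mul_schlafliKernel m hs)
  _ = circleAverage (fun z => z⁻¹ ^ m / (s - (z - z⁻¹) / 2)) 0 1 :=
    Real.circleAverage_congr_sphere fun z hz =>
      integral_exp_mul_schlafliKernel m hs (by simpa using hz)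
  _ = circleAverage (fun z => z ^ m / (s + (z - z⁻¹) / 2)) 0 1 := by
    rw [← Real.circleAverage_zero_one_congr_inv]
    congr 1 with z
    rw [inv_inv]
    ring

variable {w : ℂ}

lemma one_lt_norm_add_of_sq_eq (hw : w ^ 2 = s ^ 2 + 1) (hws : ‖w - s‖ < 1) : 1 < ‖w + s‖ := by
  have hprod : ‖w - s‖ * ‖w + s‖ = 1 := by
    rw [← norm_mul, show (w - s) * (w + s) = 1 by linear_combination hw, norm_one]
  by_contra! hle
  nlinarith [norm_nonneg (w - s)]

lemma circleAverage_pow_div_add (m : ℕ) (hw : w ^ 2 = s ^ 2 + 1) (hws : ‖w - s‖ < 1) :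
    circleAverage (fun z => z ^ m / (s + (z - z⁻¹) / 2)) 0 1 = (w - s) ^ m / w := by
  have add_ne_zero (z : ℂ) (hz : z ∈ closedBall (0 : ℂ) 1) : z + (w + s) ≠ 0 := by
    intro h
    have hnorm : ‖w + s‖ = ‖z‖ := by rw [← norm_neg, ← eq_neg_of_add_eq_zero_left h]
    linarith [one_lt_norm_add_of_sq_eq hw hws, mem_closedBall_zero_iff.mp hz]
  have hdiff : DiffContOnCl ℂ (fun z => 2 * z ^ m / (z + (w + s))) (ball 0 |1|) := by
    rw [abs_one]
    refine DifferentiableOn.diffContOnCl_ball (U := closedBall 0 1) ?_ subset_rfl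
    exact DifferentiableOn.div (by fun_prop) (by fun_prop) add_ne_zero
  have factor (z : ℂ) (hz : z ∈ sphere (0 : ℂ) |1|) : z ^ m / (s + (z - z⁻¹) / 2) =
      ((z - 0) / (z - (w - s))) • (2 * z ^ m / (z + (w + s))) := by
    have hz0 : z ≠ 0 := ne_zero_of_mem_unit_sphere ⟨z, by simpa using hz⟩
    have hden : s + (z - z⁻¹) / 2 = (z - (w - s)) * (z + (w + s)) / (2 * z) := by
      field_simp
      linear_combination hw
    rw [hden, smul_eq_mul, div_div_eq_mul_div, div_mul_div_comm]
    ring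
  rw [Real.circleAverage_congr_sphere factor, hdiff.circleAverage_smul_div (by simpa using hws),
    show w - s + (w + s) = 2 * w by ring, mul_div_mul_left _ _ two_ne_zero]

theorem integral_exp_mul_besselJr (m : ℕ) (hs : 0 < s.re) (hw : w ^ 2 = s ^ 2 + 1)
    (hws : ‖w - s‖ < 1) :
    ∫ y in Set.Ioi (0 : ℝ), exp (-s * y) * besselJr m y = (w - s) ^ m / w := by
  rw [integral_exp_mul_besselJr_eq_circleAverage m hs, circleAverage_pow_div_add m hw hws]

end Laplace

lemma exists_continuousAt_sq_eq {X : Type*} [TopologicalSpace X] {f : X → ℂ} {x : X} {w : ℂ}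
    (hf : ContinuousAt f x) (hw : w ^ 2 = f x) (hw0 : w ≠ 0) :
    ∃ g : X → ℂ, ContinuousAt g x ∧ g x = w ∧ ∀ t, g t ^ 2 = f t := by
  have hx : f x / w ^ 2 = 1 := by rw [← hw, div_self (pow_ne_zero 2 hw0)]
  refine ⟨fun t => w * (f t / w ^ 2) ^ ((2 : ℕ)⁻¹ : ℂ), ?_, by simp [hx], fun t => ?_⟩
  · refine continuousAt_const.mul ((hf.div_const _).cpow continuousAt_const ?_)
    simp [hx]
  · rw [mul_pow, Complex.cpow_nat_inv_pow _ two_ne_zero, mul_div_cancel₀ _ (pow_ne_zero 2 hw0)]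

theorem tendsto_integral_exp_mul_besselJr (m : ℕ) {s w : ℂ} (hw : w ^ 2 = s ^ 2 + 1)
    (hws : ‖w - s‖ < 1) :
    Tendsto (fun t : ℂ => ∫ y in Set.Ioi (0 : ℝ), exp (-t * y) * besselJr m y)
      (𝓝[{t | 0 < t.re}] s) (𝓝 ((w - s) ^ m / w)) := by
  have hw0 : w ≠ 0 := by
    rintro rfl
    have := one_lt_norm_add_of_sq_eq hw hws
    simp only [zero_sub, norm_neg, zero_add] at hws this
    exact hws.not_gt this
  obtain ⟨g, g_cont, rfl, g_sq⟩ := exists_continuousAt_sq_eq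
    (f := fun t : ℂ => t ^ 2 + 1) (by fun_prop) hw hw0
  have g_lt : ∀ᶠ t in 𝓝 s, ‖g t - t‖ < 1 :=
    (g_cont.sub continuousAt_id).norm.eventually_lt_const hws
  have g_tendsto : Tendsto (fun t => (g t - t) ^ m / g t) (𝓝 s) (𝓝 ((g s - s) ^ m / g s)) :=
    ((g_cont.sub continuousAt_id).pow m).div g_cont hw0
  refine (g_tendsto.mono_left nhdsWithin_le_nhds).congr' ?_
  filter_upwards [self_mem_nhdsWithin, nhdsWithin_le_nhds g_lt] with t ht hlt
  exact (integral_exp_mul_besselJr m ht (g_sq t) hlt).symm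

lemma tendsto_ofReal_sub_mul_I (c : ℝ) :
    Tendsto (fun b : ℝ => (b - c * I : ℂ)) (𝓝[>] 0) (𝓝[{t | 0 < t.re}] (-(c * I))) := by
  refine tendsto_nhdsWithin_iff.mpr ⟨?_, ?_⟩
  · have hcont : Continuous fun b : ℝ => (b - c * I : ℂ) := by fun_prop
    simpa using (hcont.tendsto 0).mono_left nhdsWithin_le_nhds
  · filter_upwards [self_mem_nhdsWithin] with b hb
    simpa using hb

theorem tendsto_integral_exp_mul_besselJr_of_one_lt (m : ℕ) {c : ℝ} (hc : 1 < c) :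
    Tendsto (fun b : ℝ => ∫ y in Set.Ioi (0 : ℝ), exp (-(b - c * I) * y) * besselJr m y) (𝓝[>] 0)
      (𝓝 (I ^ (m + 1) / (√(c ^ 2 - 1) * (c + √(c ^ 2 - 1)) ^ m : ℝ))) := by
  set r := √(c ^ 2 - 1)
  have hr_sq : r ^ 2 = c ^ 2 - 1 := Real.sq_sqrt (by nlinarith)
  have hr_pos : 0 < r := Real.sqrt_pos.mpr (by nlinarith)
  have sub_eq_inv : c - r = (c + r)⁻¹ := eq_inv_of_mul_eq_one_left (by linarith)
  have hsq : (-(r * I)) ^ 2 = (-(c * I)) ^ 2 + 1 := by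
    have : (r : ℂ) ^ 2 = c ^ 2 - 1 := mod_cast hr_sq
    linear_combination (r ^ 2 - c ^ 2) * Complex.I_sq - this
  have hdiff : -(r * I) - -(c * I) = I * ((c + r)⁻¹ : ℝ) := by
    rw [← sub_eq_inv]
    push_cast
    ring
  have hlt : ‖-(r * I) - -(c * I)‖ < 1 := by
    rw [hdiff, norm_mul, Complex.norm_I, one_mul, Complex.norm_of_nonneg (by positivity)]
    exact inv_lt_one_of_one_lt₀ (by linarith)
  have hlim := (tendsto_integral_exp_mul_besselJr m hsq hlt).comp (tendsto_ofReal_sub_mul_I c)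
  have hvalue : (-(r * I) - -(c * I)) ^ m / -(r * I) =
      I ^ (m + 1) / (r * (c + r) ^ m : ℝ) := by
    rw [hdiff, ← mul_neg, ← Complex.inv_I]
    push_cast
    simp only [div_eq_mul_inv, mul_inv, inv_inv, mul_pow, inv_pow, pow_succ]
    ring
  rwa [hvalue] at hlim

lemma re_exp_mul_besselJr (m : ℕ) (b c y : ℝ) :
    (exp (-(b - c * I) * y) * besselJr m y).re =
      Real.exp (-(b * y)) * besselJr m y * Real.cos (c * y) := by
  have hre : (-(b - c * I) * y).re = -(b * y) := by simp
  have him : (-(b - c * I) * y).im = c * y := by simp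
  rw [Complex.re_mul_ofReal, Complex.exp_re, hre, him]
  ring

theorem abel_limit_cos_gt_one_general (m : ℕ) {c : ℝ} (hc : 1 < c) :
    (∀ b : ℝ, 0 < b → IntegrableOn (fun y : ℝ =>
        Real.exp (-(b * y)) * besselJr m y * Real.cos (c * y)) (Set.Ioi 0)) ∧
    Tendsto (fun b : ℝ => ∫ y in Set.Ioi (0 : ℝ),
        Real.exp (-(b * y)) * besselJr m y * Real.cos (c * y))
      (𝓝[>] 0) (𝓝 ((I ^ (m + 1)).re / (√(c ^ 2 - 1) * (c + √(c ^ 2 - 1)) ^ m))) := by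
  have integrable (b : ℝ) (hb : 0 < b) : IntegrableOn
      (fun y : ℝ => exp (-(b - c * I) * y) * besselJr m y) (Set.Ioi 0) :=
    integrableOn_exp_mul_besselJr m (by simpa using hb)
  refine ⟨fun b hb => ?_, ?_⟩
  · simpa only [← re_exp_mul_besselJr] using! (integrable b hb).re
  · have hlim := (Complex.continuous_re.tendsto _).comp
      (tendsto_integral_exp_mul_besselJr_of_one_lt m hc)
    rw [Complex.div_ofReal_re] at hlim
    refine hlim.congr' ?_
    filter_upwards [self_mem_nhdsWithin] with b hb
    simpa only [← re_exp_mul_besselJr] using! (integral_re (integrable b hb)).symm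

/-- Let `k ≥ 1` and `c > 1`.  Then, the integral being absolutely convergent for each `b > 0`,
`lim_{b→0⁺} ∫₀^∞ e^{-by} J_{2k-1}(y) cos(cy) dy = (-1)^k / (√(c²-1) (c+√(c²-1))^{2k-1})`. -/
theorem abel_limit_cos_gt_one (k : ℕ) (hk : 1 ≤ k) (c : ℝ) (hc : 1 < c) :
    (∀ b : ℝ, 0 < b → IntegrableOn (fun y : ℝ =>
        Real.exp (-(b * y)) * besselJr (2 * k - 1) y * Real.cos (c * y)) (Set.Ioi 0)) ∧
    Tendsto (fun b : ℝ => ∫ y in Set.Ioi (0 : ℝ),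
        Real.exp (-(b * y)) * besselJr (2 * k - 1) y * Real.cos (c * y))
      (nhdsWithin 0 (Set.Ioi 0))
      (nhds ((-1 : ℝ) ^ k /
        (Real.sqrt (c ^ 2 - 1) * (c + Real.sqrt (c ^ 2 - 1)) ^ (2 * k - 1)))) := by
  have hI : (I ^ (2 * k - 1 + 1)).re = (-1) ^ k := by
    rw [show 2 * k - 1 + 1 = 2 * k by omega, pow_mul, Complex.I_sq]
    norm_cast
  simpa only [hI] using abel_limit_cos_gt_one_general (2 * k - 1) hc
end
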